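/- Let 0 < r ≤ 1 ≤ R, ε > 0, and let λ be one of the four phases λ_{ε₁,ε₂}. Let q ∈ (2, ∞] and p ≥ 4q/(q−2) (or (p,q) = (∞,2)). Then there exists a constant C > 0, depending only on γ̄, ψ, p and q, such that for every f ∈ L²(ℝ³), ‖Ψ_{r,R}(D) G_λ(·) f‖_{L^p((0,∞); L^q(ℝ³))} ≤ C R^{3/2 − 3/q} r^{−4/p} ε^{1/p} ‖f‖_{L²(ℝ³)}. In particular the endpoint exponent p = 4q/(q−2) is included. -/

import Mathlib

/- Common setup: the space ℝ³ (as a Euclidean space), Fourier transform,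
   partial derivatives, Sobolev-type norms. -/

noncomputable section

open MeasureTheory Real Complex Filter ENNReal

/-- The space `ℝ³`. -/
abbrev E3 : Type := EuclideanSpace ℝ (Fin 3)

/-- Fourier transform on `ℝ³`. -/
def FT (f : E3 → ℂ) : E3 → ℂ := FourierTransform.fourier f

/-- Inverse Fourier transform on `ℝ³`. -/
def FTinv (f : E3 → ℂ) : E3 → ℂ := FourierTransformInv.fourierInv f

/-- The point `(x₁, x₂, x₃) ∈ ℝ³`. -/
def pt (x1 x2 x3 : ℝ) : E3 := (EuclideanSpace.equiv (Fin 3) ℝ).symm ![x1, x2, x3]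

/-- Fourier transform of a real-valued function. -/
def FTr (f : E3 → ℝ) : E3 → ℂ := FT (fun x => (f x : ℂ))

/-- Partial derivative `∂ᵢ` of a real-valued function. -/
def pd (i : Fin 3) (f : E3 → ℝ) (x : E3) : ℝ := fderiv ℝ f x (EuclideanSpace.single i 1)

/-- Partial derivative `∂ᵢ` of a complex-valued function. -/
def pdC (i : Fin 3) (f : E3 → ℂ) (x : E3) : ℂ := fderiv ℝ f x (EuclideanSpace.single i 1)

/-- A smooth cut-off function `ψ` with values in `[0,1]`, equal to `1` on `(-∞,1]`
and to `0` on `[2,∞)`. -/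
def IsCutoff (ψ : ℝ → ℝ) : Prop :=
  ContDiff ℝ (⊤ : ℕ∞) ψ ∧ (∀ x, ψ x ∈ Set.Icc (0:ℝ) 1) ∧ (∀ x ≤ (1:ℝ), ψ x = 1) ∧
    (∀ x, (2:ℝ) ≤ x → ψ x = 0)

/-- The norm `|ξ_h|` of the horizontal component of a frequency `ξ`. -/
def xih (ξ : E3) : ℝ := Real.sqrt (ξ 0 ^ 2 + ξ 1 ^ 2)

/-- The frequency cut-off function `Ψ_{r,R}`. -/
def Psi (ψ : ℝ → ℝ) (r R : ℝ) (ξ : E3) : ℝ :=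
  ψ (‖ξ‖ / R) * ((1 - ψ (xih ξ / r)) * (1 - ψ (|ξ 2| / r)))

/-- The set `C_{r,R} = {ξ : |ξ| ≤ R, |ξ_h| ≥ r, |ξ₃| ≥ r}`. -/
def CrR (r R : ℝ) : Set E3 := {ξ | ‖ξ‖ ≤ R ∧ r ≤ xih ξ ∧ r ≤ |ξ 2|}

/-- The frequency cut-off operator `Ψ_{r,R}(D) g = 𝓕⁻¹(Ψ_{r,R} ĝ)`. -/
def PsiD (ψ : ℝ → ℝ) (r R : ℝ) (g : E3 → ℂ) : E3 → ℂ :=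
  FTinv (fun ξ => (Psi ψ r R ξ : ℂ) * FT g ξ)

/-- The eigenvalues `λ_{ε₁,ε₂}(ξ)` of `B̂(ξ)`. -/
def lamEV (γ ε1 ε2 : ℝ) (ξ : E3) : ℂ :=
  (ε1 : ℂ) * (Complex.I / 2) *
    (((Real.sqrt (1 + γ ^ 2 * ‖ξ‖ ^ 2 + 2 * γ * ξ 2) +
      ε2 * Real.sqrt (1 + γ ^ 2 * ‖ξ‖ ^ 2 - 2 * γ * ξ 2)) : ℝ) : ℂ)

/-- The cut-off scalar propagator `Ψ_{r,R}(D) G_λ(t) f = 𝓕⁻¹(Ψ_{r,R}(ξ) e^{(t/ε)λ(ξ)} f̂(ξ))`. -/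
def PsiG (ψ : ℝ → ℝ) (r R γ ε1 ε2 ε t : ℝ) (f : E3 → ℂ) : E3 → ℂ :=
  FTinv (fun ξ => ((Psi ψ r R ξ : ℝ) : ℂ) *
    Complex.exp (((t / ε : ℝ) : ℂ) * lamEV γ ε1 ε2 ξ) * FT f ξ)

/-!
The phase is that of a two-centre distance function: `1 + γ²|ξ|² ± 2γξ₃ = |γξ ± e₃|²`, so
`λ = ε₁ i (|γξ + e₃| + ε₂ |γξ - e₃|) / 2`. Each norm is convex, with Hessian singular only in the
radial direction from its centre; where `ξ₃ ≥ r`, the Hessian of `|γξ - e₃|` along a suitable fixed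
direction exceeds that of `|γξ + e₃|`, so that for either sign the phase has along these lines a
second derivative bounded away from zero. The direction `e₃` works near the axis, with curvature
proportional to `|ξ_h|²`, and a slanted direction `e_i + e₃` where `|ξ_i|` dominates. Van der
Corput's lemma on each such convex piece, and integration over the parallel lines, give the kernel
bound `R³ r^{-1/2} |τ|^{-1/2}`.

By a `TT*` argument and the Hardy-Littlewood-Sobolev inequality, this decay bounds the maximal
function `sup_x |u(t, x)|` in `L⁴_t`. Energy conservation controls `L^∞_t L²_x`, the compact
frequency support controls `L^∞_{t,x}`, and Hölder's inequality interpolates between the three.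
-/

section Interpolation

variable {α β ι : Type*} [MeasurableSpace α] [MeasurableSpace β] [ENorm ι]
  {μ : Measure α} {ν : Measure β} {p q s : ℝ≥0∞}

theorem eLpNorm_le_eLpNorm_rpow_mul_rpow_of_enorm_le {u : α → ι} {M : ℝ≥0∞} (hp : p ≠ 0)
    (hpq : p ≤ q) (hM : M ≠ ⊤) (hu : ∀ᵐ x ∂μ, ‖u x‖ₑ ≤ M) :
    eLpNorm u q μ ≤
      eLpNorm u p μ ^ (p.toReal / q.toReal) * M ^ (1 - p.toReal / q.toReal) := by
  rcases eq_or_ne q ⊤ with rfl | hq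
  · simpa using eLpNormEssSup_le_of_ae_enorm_bound hu
  have hp' : p ≠ ⊤ := ne_top_of_le_ne_top hq hpq
  have hP : 0 < p.toReal := ENNReal.toReal_pos hp hp'
  have hPQ : p.toReal ≤ q.toReal := ENNReal.toReal_mono hq hpq
  have hQ : 0 < q.toReal := hP.trans_le hPQ
  have hpow : ∀ᵐ x ∂μ, ‖u x‖ₑ ^ q.toReal ≤
      M ^ (q.toReal - p.toReal) * ‖u x‖ₑ ^ p.toReal := by
    filter_upwards [hu] with x hx
    calc ‖u x‖ₑ ^ q.toReal
        = ‖u x‖ₑ ^ (q.toReal - p.toReal) * ‖u x‖ₑ ^ p.toReal := by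
          rw [← ENNReal.rpow_add_of_nonneg _ _ (sub_nonneg.2 hPQ) hP.le, sub_add_cancel]
      _ ≤ _ := by gcongr
  rw [eLpNorm_eq_lintegral_rpow_enorm_toReal (hp.bot_lt.trans_le hpq).ne' hq,
    eLpNorm_eq_lintegral_rpow_enorm_toReal hp hp', ← ENNReal.rpow_mul]
  calc (∫⁻ x, ‖u x‖ₑ ^ q.toReal ∂μ) ^ (1 / q.toReal)
      ≤ (M ^ (q.toReal - p.toReal) * ∫⁻ x, ‖u x‖ₑ ^ p.toReal ∂μ) ^ (1 / q.toReal) := by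
        rw [← lintegral_const_mul' _ _ (ENNReal.rpow_ne_top_of_nonneg (sub_nonneg.2 hPQ) hM)]
        gcongr ?_ ^ _
        exact lintegral_mono_ae hpow
    _ = _ := by
        rw [ENNReal.mul_rpow_of_nonneg _ _ (by positivity), ← ENNReal.rpow_mul, mul_comm]
        congr 2 <;> field_simp

theorem eLpNorm_rpow_le_rpow_mul_rpow_of_le {m : β → ℝ≥0∞} {M : ℝ≥0∞} {θ : ℝ} (hM : M ≠ ⊤)
    (hm : ∀ t, m t ≤ M) (hs : s ≠ 0) (hs' : s ≠ ⊤) (hθ : 0 ≤ θ)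
    (hp : p = ⊤ ∨ s.toReal ≤ θ * p.toReal) :
    eLpNorm (fun t => m t ^ θ) p ν ≤
      M ^ (θ - s.toReal / p.toReal) * eLpNorm m s ν ^ (s.toReal / p.toReal) := by
  rcases eq_or_ne p ⊤ with rfl | hp_top
  · simpa using eLpNormEssSup_le_of_ae_enorm_bound (μ := ν)
      (Eventually.of_forall fun t => ENNReal.rpow_le_rpow (hm t) hθ)
  have hS : 0 < s.toReal := ENNReal.toReal_pos hs hs'
  have hθP := hp.resolve_left hp_top
  have hθ' : 0 < θ := hθ.lt_of_ne (by rintro rfl; linarith)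
  have hP : 0 < p.toReal := pos_of_mul_pos_right (hS.trans_le hθP) hθ
  have hle : s ≤ p * ENNReal.ofReal θ := by
    rw [← ENNReal.ofReal_toReal hs', ← ENNReal.ofReal_toReal hp_top, ← ENNReal.ofReal_mul hP.le]
    exact ENNReal.ofReal_le_ofReal (by linarith)
  have hinterp := eLpNorm_le_eLpNorm_rpow_mul_rpow_of_enorm_le (μ := ν) hs hle hM
    (Eventually.of_forall fun t => (enorm_eq_self (m t)).trans_le (hm t))
  calc eLpNorm (fun t => m t ^ θ) p ν = eLpNorm m (p * ENNReal.ofReal θ) ν ^ θ := by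
        simpa using eLpNorm_enorm_rpow (p := p) (μ := ν) m hθ'
    _ ≤ _ := ENNReal.rpow_le_rpow hinterp hθ
    _ = _ := by
        rw [ENNReal.mul_rpow_of_nonneg _ _ hθ, ← ENNReal.rpow_mul, ← ENNReal.rpow_mul,
          ENNReal.toReal_mul, ENNReal.toReal_ofReal hθ, mul_comm]
        congr 2 <;> field_simp

theorem one_sub_two_div_toReal_nonneg (hq : 2 ≤ q) : 0 ≤ 1 - 2 / q.toReal := by
  rcases eq_or_ne q ⊤ with rfl | hq'
  · simp
  · have := ENNReal.toReal_mono hq' hq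
    rw [ENNReal.toReal_ofNat] at this
    exact sub_nonneg.2 (div_le_one_of_le₀ this ENNReal.toReal_nonneg)

theorem one_sub_two_div_toReal_sub_div_nonneg {a : ℝ} (hq : 2 ≤ q)
    (hp : p = ⊤ ∨ a ≤ (1 - 2 / q.toReal) * p.toReal) :
    0 ≤ 1 - 2 / q.toReal - a / p.toReal := by
  have hθ := one_sub_two_div_toReal_nonneg hq
  rcases hp with rfl | hp
  · simpa using hθ
  · exact sub_nonneg.2 (div_le_of_le_mul₀ ENNReal.toReal_nonneg hθ hp)

theorem eLpNorm_eLpNorm_toReal_le {u : β → α → ι} {m : β → ℝ≥0∞} {F M : ℝ≥0∞}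
    (hF : F ≠ ⊤) (hM : M ≠ ⊤) (henergy : ∀ t, eLpNorm (u t) 2 μ ≤ F)
    (hum : ∀ t x, ‖u t x‖ₑ ≤ m t) (hm : ∀ t, m t ≤ M) (hs : s ≠ 0) (hs' : s ≠ ⊤) (hq : 2 ≤ q)
    (hp : p = ⊤ ∨ s.toReal ≤ (1 - 2 / q.toReal) * p.toReal) :
    eLpNorm (fun t => (eLpNorm (u t) q μ).toReal) p ν ≤
      F ^ (2 / q.toReal) * (M ^ (1 - 2 / q.toReal - s.toReal / p.toReal) *
        eLpNorm m s ν ^ (s.toReal / p.toReal)) := by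
  have hF' : F ^ (2 / q.toReal) ≠ ⊤ := ENNReal.rpow_ne_top_of_nonneg (by positivity) hF
  have hspace (t : β) : ‖(eLpNorm (u t) q μ).toReal‖ₑ ≤
      (F ^ (2 / q.toReal)).toNNReal * ‖m t ^ (1 - 2 / q.toReal)‖ₑ := by
    rw [ENNReal.coe_toNNReal hF', enorm_eq_self, Real.enorm_of_nonneg ENNReal.toReal_nonneg]
    refine ENNReal.ofReal_toReal_le.trans
      ((eLpNorm_le_eLpNorm_rpow_mul_rpow_of_enorm_le two_ne_zero hq
        (ne_top_of_le_ne_top hM (hm t)) (Eventually.of_forall (hum t))).trans ?_)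
    rw [ENNReal.toReal_ofNat]
    gcongr
    exact henergy t
  refine (eLpNorm_le_nnreal_smul_eLpNorm_of_ae_le_mul' (Eventually.of_forall hspace) p).trans ?_
  rw [ENNReal.smul_def, ENNReal.coe_toNNReal hF', smul_eq_mul]
  gcongr
  exact eLpNorm_rpow_le_rpow_mul_rpow_of_le hM hm hs hs' (one_sub_two_div_toReal_nonneg hq) hp

end Interpolation

section Plancherel

open FourierTransform

variable {V : Type*} [NormedAddCommGroup V] [InnerProductSpace ℝ V] [MeasurableSpace V]
  [BorelSpace V] [FiniteDimensional ℝ V] {f : V → ℂ}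

theorem fourier_eq_zero_of_not_integrable (hf : ¬ Integrable f) : 𝓕 f = 0 :=
  funext fun ξ => integral_undef fun h => hf ((Real.fourierIntegral_convergent_iff ξ).1 h)

theorem continuous_fourier_of_integrable (hf : Integrable f) : Continuous (𝓕 f) :=
  VectorFourier.fourierIntegral_continuous Real.continuous_fourierChar
    (L := innerₗ V) continuous_inner hf

-- Both sides define the same tempered distribution.
theorem coeFn_fourier_toLp_ae_eq (hf : Integrable f) (hf2 : MemLp f 2) :
    ((𝓕 (hf2.toLp f) : Lp ℂ 2 (volume : Measure V)) : V → ℂ) =ᵐ[volume] 𝓕 f := by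
  refine ae_eq_of_integral_contDiff_smul_eq ((Lp.memLp _).locallyIntegrable one_le_two)
    (continuous_fourier_of_integrable hf).locallyIntegrable fun g hg hgc => ?_
  have hGc : HasCompactSupport fun x => (g x : ℂ) :=
    hgc.comp_left (g := fun x : ℝ => (x : ℂ)) Complex.ofReal_zero
  set G : SchwartzMap V ℂ := hGc.toSchwartzMap (Complex.ofRealCLM.contDiff.comp hg)
  have hG (x : V) : G x = (g x : ℂ) := rfl
  have hdistr := DFunLike.congr_fun (Lp.fourier_toTemperedDistribution_eq (hf2.toLp f)) G
  simp only [TemperedDistribution.fourier_apply, Lp.toTemperedDistribution_apply] at hdistr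
  have hflip := VectorFourier.integral_fourierIntegral_smul_eq_flip (μ := volume) (ν := volume)
    (L := innerₗ V) Real.continuous_fourierChar continuous_inner G.integrable hf
  rw [flip_innerₗ] at hflip
  calc ∫ x, g x • (𝓕 (hf2.toLp f) : Lp ℂ 2 (volume : Measure V)) x
      = ∫ x, G x • (𝓕 (hf2.toLp f) : Lp ℂ 2 (volume : Measure V)) x := by
        simp only [hG, Complex.real_smul, smul_eq_mul]
    _ = ∫ x, 𝓕 (G : V → ℂ) x • f x := by
        rw [← hdistr]
        refine integral_congr_ae ?_
        filter_upwards [hf2.coeFn_toLp] with x hx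
        rw [hx]
        rfl
    _ = ∫ x, G x • 𝓕 f x := hflip
    _ = ∫ x, g x • 𝓕 f x := by simp only [hG, Complex.real_smul, smul_eq_mul]

theorem eLpNorm_fourier_eq (hf : Integrable f) (hf2 : MemLp f 2) :
    eLpNorm (𝓕 f) 2 volume = eLpNorm f 2 volume := by
  have hnorm := Lp.norm_fourier_eq (hf2.toLp f)
  rw [Lp.norm_def, Lp.norm_def, ENNReal.toReal_eq_toReal_iff' (Lp.eLpNorm_ne_top _)
    (Lp.eLpNorm_ne_top _), eLpNorm_congr_ae hf2.coeFn_toLp,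
    eLpNorm_congr_ae (coeFn_fourier_toLp_ae_eq hf hf2)] at hnorm
  exact hnorm

theorem eLpNorm_fourierInv_eq (hf : Integrable f) (hf2 : MemLp f 2) :
    eLpNorm (𝓕⁻ f) 2 volume = eLpNorm f 2 volume := by
  rw [← eLpNorm_fourier_eq hf hf2, funext (Real.fourierInv_eq_fourier_neg f)]
  exact eLpNorm_comp_measurePreserving (continuous_fourier_of_integrable hf).aestronglyMeasurable
    (Measure.measurePreserving_neg volume)

end Plancherel

section HardyLittlewoodSobolev

open scoped NNReal

theorem lintegral_comp_enorm_sub (g : ℝ≥0∞ → ℝ≥0∞) (t : ℝ) :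
    ∫⁻ s, g ‖t - s‖ₑ = 2 * ∫⁻ s in Set.Ioi (0 : ℝ), g (ENNReal.ofReal s) := by
  have hpos : ∫⁻ s in Set.Ioi (0 : ℝ), g ‖s‖ₑ = ∫⁻ s in Set.Ioi (0 : ℝ), g (ENNReal.ofReal s) :=
    setLIntegral_congr_fun measurableSet_Ioi fun s hs => by
      simp only [Real.enorm_of_nonneg (Set.mem_Ioi.1 hs).le]
  have hneg : ∫⁻ s in (Set.Ioi (0 : ℝ))ᶜ, g ‖s‖ₑ = ∫⁻ s in Set.Ioi (0 : ℝ), g ‖s‖ₑ := by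
    rw [Set.compl_Ioi, setLIntegral_congr (Iio_ae_eq_Iic (a := (0 : ℝ))).symm,
      ← (Measure.measurePreserving_neg (volume : Measure ℝ)).setLIntegral_comp_preimage_emb
        (MeasurableEquiv.neg ℝ).measurableEmbedding, Set.neg_preimage, Set.neg_Iio, neg_zero]
    simp only [enorm_neg]
  rw [lintegral_sub_left_eq_self (fun s => g ‖s‖ₑ) t,
    ← lintegral_add_compl _ (measurableSet_Ioi (a := (0 : ℝ))), hneg, hpos, two_mul]

theorem setLIntegral_enorm_sub_le_rpow {α ρ : ℝ} (hα : α < 1) (hρ : 0 ≤ ρ) (t : ℝ) :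
    ∫⁻ s in {s | ‖t - s‖ₑ ≤ ENNReal.ofReal ρ}, ‖t - s‖ₑ ^ (-α) =
      ENNReal.ofReal (2 / (1 - α) * ρ ^ (1 - α)) := by
  have hint : IntegrableOn (fun s : ℝ => s ^ (-α)) (Set.Ioc 0 ρ) :=
    (intervalIntegrable_iff_integrableOn_Ioc_of_le hρ).1
      (intervalIntegral.intervalIntegrable_rpow' (by linarith))
  calc ∫⁻ s in {s | ‖t - s‖ₑ ≤ ENNReal.ofReal ρ}, ‖t - s‖ₑ ^ (-α)
      = ∫⁻ s, (Set.Iic (ENNReal.ofReal ρ)).indicator (fun x => x ^ (-α)) ‖t - s‖ₑ := by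
        rw [← lintegral_indicator (measurableSet_le (by fun_prop) measurable_const)]
        rfl
    _ = 2 * ∫⁻ s in Set.Ioi (0 : ℝ), (Set.Iic ρ).indicator
          (fun s => ENNReal.ofReal s ^ (-α)) s := by
        rw [lintegral_comp_enorm_sub]
        congr 1
        refine lintegral_congr fun s => ?_
        simp only [Set.indicator, Set.mem_Iic, ENNReal.ofReal_le_ofReal_iff hρ]
    _ = 2 * ∫⁻ s in Set.Ioc 0 ρ, ENNReal.ofReal (s ^ (-α)) := by
        rw [setLIntegral_indicator measurableSet_Iic, Set.inter_comm, Set.Ioi_inter_Iic]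
        congr 1
        exact setLIntegral_congr_fun measurableSet_Ioc fun s hs => ENNReal.ofReal_rpow_of_pos hs.1
    _ = ENNReal.ofReal (2 / (1 - α) * ρ ^ (1 - α)) := by
        rw [← ofReal_integral_eq_lintegral_ofReal hint
          ((ae_restrict_mem measurableSet_Ioc).mono fun s hs => Real.rpow_nonneg hs.1.le _),
          ← intervalIntegral.integral_of_le hρ, integral_rpow (Or.inl (by linarith)),
          Real.zero_rpow (by linarith), ← ENNReal.ofReal_ofNat, ← ENNReal.ofReal_mul two_pos.le]
        ring_nf

theorem setLIntegral_lt_enorm_sub_rpow_neg_two {ρ : ℝ} (hρ : 0 < ρ) (t : ℝ) :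
    ∫⁻ s in {s | ENNReal.ofReal ρ < ‖t - s‖ₑ}, ‖t - s‖ₑ ^ (-2 : ℝ) =
      ENNReal.ofReal (2 * ρ⁻¹) := by
  calc ∫⁻ s in {s | ENNReal.ofReal ρ < ‖t - s‖ₑ}, ‖t - s‖ₑ ^ (-2 : ℝ)
      = ∫⁻ s, (Set.Ioi (ENNReal.ofReal ρ)).indicator (fun x => x ^ (-2 : ℝ)) ‖t - s‖ₑ := by
        rw [← lintegral_indicator (measurableSet_lt measurable_const (by fun_prop))]
        rfl
    _ = 2 * ∫⁻ s in Set.Ioi (0 : ℝ), (Set.Ioi ρ).indicator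
          (fun s => ENNReal.ofReal s ^ (-2 : ℝ)) s := by
        rw [lintegral_comp_enorm_sub]
        congr 1
        refine lintegral_congr fun s => ?_
        simp only [Set.indicator, Set.mem_Ioi, ENNReal.ofReal_lt_ofReal_iff_of_nonneg hρ.le]
    _ = 2 * ∫⁻ s in Set.Ioi ρ, ENNReal.ofReal (s ^ (-2 : ℝ)) := by
        rw [setLIntegral_indicator measurableSet_Ioi, Set.Ioi_inter_Ioi, max_eq_left hρ.le]
        congr 1
        exact setLIntegral_congr_fun measurableSet_Ioi fun s hs =>
          ENNReal.ofReal_rpow_of_pos (hρ.trans hs)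
    _ = ENNReal.ofReal (2 * ρ⁻¹) := by
        rw [← ofReal_integral_eq_lintegral_ofReal (integrableOn_Ioi_rpow_of_lt (by norm_num) hρ)
          ((ae_restrict_mem measurableSet_Ioi).mono fun s hs =>
            Real.rpow_nonneg (hρ.trans hs).le _),
          integral_Ioi_rpow_of_lt (by norm_num) hρ, ← ENNReal.ofReal_ofNat,
          ← ENNReal.ofReal_mul two_pos.le]
        norm_num [Real.rpow_neg_one]

/-- The constant produced by the proof of the Hardy–Littlewood–Sobolev inequality on `ℝ` with
kernel `|t| ^ (-α)`. -/
def hlsConst (α : ℝ) : ℝ := 2 * (2 / (1 - α) + 2)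

theorem hlsConst_pos {α : ℝ} (hα1 : α < 1) : 0 < hlsConst α := by
  have := sub_pos.2 hα1
  unfold hlsConst
  positivity

variable {α : ℝ} {f : ℝ → ℝ≥0} {M : ℝ}

theorem setLIntegral_far_mul_enorm_sub_rpow_le (hα0 : 0 < α) (hα1 : α < 1) (hf : Measurable f)
    (hM : 0 < M) (hfM : ∫⁻ s, (f s : ℝ≥0∞) ^ (2 / (2 - α)) = ENNReal.ofReal M) (t : ℝ) {b : ℝ}
    (hb : 0 < b) :
    ∫⁻ s in {s | ENNReal.ofReal (M * b ^ (-(2 / (2 - α)))) < ‖t - s‖ₑ},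
        f s * ‖t - s‖ₑ ^ (-α) ≤
      ENNReal.ofReal (2 * (M ^ (1 - α) * b ^ (α / (2 - α)))) := by
  have h2α : 0 < 2 - α := by linarith
  have hρ : 0 < M * b ^ (-(2 / (2 - α))) := by positivity
  set A := {s | ENNReal.ofReal (M * b ^ (-(2 / (2 - α)))) < ‖t - s‖ₑ}
  have hconj : (2 / (2 - α)).HolderConjugate (2 / α) := by
    refine Real.holderConjugate_iff.2 ⟨(one_lt_div h2α).2 (by linarith), ?_⟩
    simp only [inv_div]
    ring
  have hkernel (s : ℝ) : (‖t - s‖ₑ ^ (-α)) ^ (2 / α) = ‖t - s‖ₑ ^ (-2 : ℝ) := by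
    rw [← ENNReal.rpow_mul]
    congr 1
    field_simp
  calc ∫⁻ s in A, f s * ‖t - s‖ₑ ^ (-α)
      ≤ (∫⁻ s in A, (f s : ℝ≥0∞) ^ (2 / (2 - α))) ^ (1 / (2 / (2 - α))) *
          (∫⁻ s in A, (‖t - s‖ₑ ^ (-α)) ^ (2 / α)) ^ (1 / (2 / α)) :=
        ENNReal.lintegral_mul_le_Lp_mul_Lq _ hconj (by fun_prop) (by fun_prop)
    _ ≤ ENNReal.ofReal M ^ (1 / (2 / (2 - α))) *
          ENNReal.ofReal (2 * (M * b ^ (-(2 / (2 - α))))⁻¹) ^ (1 / (2 / α)) := by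
        simp only [hkernel, A, setLIntegral_lt_enorm_sub_rpow_neg_two hρ]
        gcongr
        exact (setLIntegral_le_lintegral _ _).trans hfM.le
    _ = ENNReal.ofReal (2 ^ (α / 2) * (M ^ (1 - α) * b ^ (α / (2 - α)))) := by
        rw [ENNReal.ofReal_rpow_of_pos hM, ENNReal.ofReal_rpow_of_pos (by positivity),
          ← ENNReal.ofReal_mul (by positivity), Real.mul_rpow two_pos.le (by positivity), mul_inv,
          Real.mul_rpow (by positivity) (by positivity), ← Real.rpow_neg hb.le,
          ← Real.rpow_mul hb.le, Real.inv_rpow hM.le, ← Real.rpow_neg hM.le]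
        have hexpM : M ^ (1 - α) = M ^ (1 / (2 / (2 - α))) * M ^ (-(1 / (2 / α))) := by
          rw [← Real.rpow_add hM]
          congr 1
          field_simp
          ring
        have hexpb : - -(2 / (2 - α)) * (1 / (2 / α)) = α / (2 - α) := by
          field_simp
        rw [hexpM, hexpb, one_div_div 2 α]
        ring_nf
    _ ≤ _ := by
        gcongr
        calc (2 : ℝ) ^ (α / 2) ≤ 2 ^ (1 : ℝ) :=
              Real.rpow_le_rpow_of_exponent_le one_le_two (by linarith)
          _ = 2 := Real.rpow_one 2

theorem setLIntegral_near_mul_enorm_sub_rpow_le (hα1 : α < 1) (hf : Measurable f)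
    (hM : 0 < M) (t : ℝ) {b : ℝ≥0} (hb : 0 < b) :
    ∫⁻ s in {s | f s ≤ b} ∩ {s | ‖t - s‖ₑ ≤ ENNReal.ofReal (M * (b : ℝ) ^ (-(2 / (2 - α))))},
        f s * ‖t - s‖ₑ ^ (-α) ≤
      ENNReal.ofReal (2 / (1 - α) * (M ^ (1 - α) * (b : ℝ) ^ (α / (2 - α)))) := by
  have hb' : 0 < (b : ℝ) := hb
  have h2α : 0 < 2 - α := by linarith
  set B := {s | ‖t - s‖ₑ ≤ ENNReal.ofReal (M * (b : ℝ) ^ (-(2 / (2 - α))))}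
  have hB : MeasurableSet B := measurableSet_le (by fun_prop) measurable_const
  calc ∫⁻ s in {s | f s ≤ b} ∩ B, f s * ‖t - s‖ₑ ^ (-α)
      ≤ ∫⁻ s in {s | f s ≤ b} ∩ B, b * ‖t - s‖ₑ ^ (-α) :=
        setLIntegral_mono' ((measurableSet_le hf measurable_const).inter hB) fun s hs => by
          gcongr
          exact hs.1
    _ ≤ ∫⁻ s in B, b * ‖t - s‖ₑ ^ (-α) := lintegral_mono_set Set.inter_subset_right
    _ = ENNReal.ofReal (2 / (1 - α) * (M ^ (1 - α) * (b : ℝ) ^ (α / (2 - α)))) := by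
        rw [lintegral_const_mul _ (by fun_prop),
          setLIntegral_enorm_sub_le_rpow hα1 (by positivity), ← ENNReal.ofReal_coe_nnreal,
          ← ENNReal.ofReal_mul hb'.le, Real.mul_rpow hM.le (by positivity),
          ← Real.rpow_mul hb'.le]
        have hexp : (b : ℝ) ^ (α / (2 - α)) = b * (b : ℝ) ^ (-(2 / (2 - α)) * (1 - α)) := by
          nth_rewrite 2 [← Real.rpow_one (b : ℝ)]
          rw [← Real.rpow_add hb']
          congr 1
          field_simp
          ring
        rw [hexp]
        ring_nf

-- The distance `M * b ^ (-2 / (2 - α))` balances the bound `f ≤ b`, used nearby, against Hölder's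
-- inequality, used far away.
theorem setLIntegral_le_mul_enorm_sub_rpow_le (hα0 : 0 < α) (hα1 : α < 1) (hf : Measurable f)
    (hM : 0 < M) (hfM : ∫⁻ s, (f s : ℝ≥0∞) ^ (2 / (2 - α)) = ENNReal.ofReal M) (t : ℝ) {b : ℝ≥0}
    (hb : 0 < b) :
    ∫⁻ s in {s | f s ≤ b}, f s * ‖t - s‖ₑ ^ (-α) ≤
      ENNReal.ofReal (hlsConst α / 2 * M ^ (1 - α)) * (b : ℝ≥0∞) ^ (α / (2 - α)) := by
  have hb' : 0 < (b : ℝ) := hb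
  have : 0 < 1 - α := by linarith
  set B := {s | ‖t - s‖ₑ ≤ ENNReal.ofReal (M * (b : ℝ) ^ (-(2 / (2 - α))))}
  have hB : MeasurableSet B := measurableSet_le (by fun_prop) measurable_const
  rw [← lintegral_inter_add_sdiff _ _ hB]
  calc _ ≤ ENNReal.ofReal (2 / (1 - α) * (M ^ (1 - α) * (b : ℝ) ^ (α / (2 - α)))) +
        ENNReal.ofReal (2 * (M ^ (1 - α) * (b : ℝ) ^ (α / (2 - α)))) := by
        gcongr
        · exact setLIntegral_near_mul_enorm_sub_rpow_le hα1 hf hM t hb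
        · exact (setLIntegral_far_mul_enorm_sub_rpow_le hα0 hα1 hf hM hfM t hb').trans'
            (lintegral_mono_set fun s hs => by simpa [B] using hs.2)
    _ = _ := by
        rw [← ENNReal.ofReal_coe_nnreal, ENNReal.ofReal_rpow_of_pos hb',
          ← ENNReal.ofReal_add (by positivity) (by positivity),
          ← ENNReal.ofReal_mul (by unfold hlsConst; positivity)]
        unfold hlsConst
        ring_nf

theorem lintegral_setLIntegral_le_mul_enorm_sub_rpow_le (hα0 : 0 < α) (hα1 : α < 1)
    (hf : Measurable f) (hM : 0 < M)
    (hfM : ∫⁻ s, (f s : ℝ≥0∞) ^ (2 / (2 - α)) = ENNReal.ofReal M) :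
    ∫⁻ t, ∫⁻ s in {s | f s ≤ f t}, f t * f s * ‖t - s‖ₑ ^ (-α) ≤
      ENNReal.ofReal (hlsConst α / 2) * ENNReal.ofReal M ^ (2 - α) := by
  have h2α : 0 < 2 - α := by linarith
  have hinner (t : ℝ) : ∫⁻ s in {s | f s ≤ f t}, f t * f s * ‖t - s‖ₑ ^ (-α) ≤
      ENNReal.ofReal (hlsConst α / 2 * M ^ (1 - α)) * (f t : ℝ≥0∞) ^ (2 / (2 - α)) := by
    rcases eq_or_ne (f t) 0 with h0 | h0
    · simp [h0]
    have hexp : (f t : ℝ≥0∞) ^ (2 / (2 - α)) = f t * (f t : ℝ≥0∞) ^ (α / (2 - α)) := by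
      nth_rewrite 2 [← ENNReal.rpow_one (f t : ℝ≥0∞)]
      rw [← ENNReal.rpow_add _ _ (by simpa using h0) ENNReal.coe_ne_top]
      congr 1
      field_simp
      ring
    simp_rw [mul_assoc]
    rw [lintegral_const_mul _ (by fun_prop), hexp, mul_left_comm]
    gcongr
    exact setLIntegral_le_mul_enorm_sub_rpow_le hα0 hα1 hf hM hfM t (pos_iff_ne_zero.2 h0)
  refine (lintegral_mono hinner).trans_eq ?_
  rw [lintegral_const_mul _ (by fun_prop), hfM, ENNReal.ofReal_rpow_of_pos hM,
    ENNReal.ofReal_mul (by have := hlsConst_pos hα1; positivity), mul_assoc,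
    ← ENNReal.ofReal_mul (by positivity), ← Real.rpow_add_one hM.ne']
  ring_nf

theorem lintegral_lintegral_le_two_mul_of_symm {β : Type*} [MeasurableSpace β] {μ : Measure β}
    [SFinite μ] {w : β → ℝ≥0} {F : β → β → ℝ≥0∞} (hw : Measurable w)
    (hF : Measurable (Function.uncurry F)) (hsymm : ∀ t s, F t s = F s t) :
    ∫⁻ t, ∫⁻ s, F t s ∂μ ∂μ ≤ 2 * ∫⁻ t, ∫⁻ s in {s | w s ≤ w t}, F t s ∂μ ∂μ := by
  set K : β × β → ℝ≥0∞ := {p : β × β | w p.2 ≤ w p.1}.indicator (Function.uncurry F)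
  have hK : Measurable K := hF.indicator (measurableSet_le (by fun_prop) (by fun_prop))
  have hhalf : ∫⁻ t, ∫⁻ s in {s | w s ≤ w t}, F t s ∂μ ∂μ = ∫⁻ t, ∫⁻ s, K (t, s) ∂μ ∂μ := by
    refine lintegral_congr fun t => ?_
    rw [← lintegral_indicator (measurableSet_le hw measurable_const)]
    rfl
  have hcover (t s : β) : F t s ≤ K (t, s) + K (s, t) := by
    rcases le_total (w s) (w t) with h | h
    · exact le_add_right (by simp only [K, Set.indicator, Set.mem_ofPred_eq, h, if_true,
        Function.uncurry_apply_pair, le_rfl])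
    · exact le_add_left (by simp only [K, Set.indicator, Set.mem_ofPred_eq, h, if_true,
        Function.uncurry_apply_pair, hsymm t s, le_rfl])
  calc ∫⁻ t, ∫⁻ s, F t s ∂μ ∂μ ≤ ∫⁻ t, ∫⁻ s, (K (t, s) + K (s, t)) ∂μ ∂μ := by
        gcongr with t s
        exact hcover t s
    _ = (∫⁻ t, ∫⁻ s, K (t, s) ∂μ ∂μ) + ∫⁻ t, ∫⁻ s, K (s, t) ∂μ ∂μ := by
        rw [← lintegral_add_left hK.lintegral_prod_right']
        exact lintegral_congr fun t => lintegral_add_left (hK.comp measurable_prodMk_left) _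
    _ = 2 * ∫⁻ t, ∫⁻ s in {s | w s ≤ w t}, F t s ∂μ ∂μ := by
        rw [lintegral_lintegral_swap (f := fun t s => K (s, t))
          (hK.comp measurable_swap).aemeasurable, hhalf, two_mul]

theorem lintegral_lintegral_mul_enorm_sub_rpow_le (hα0 : 0 < α) (hα1 : α < 1)
    (hf : Measurable f) :
    ∫⁻ t, ∫⁻ s, f t * f s * ‖t - s‖ₑ ^ (-α) ≤
      ENNReal.ofReal (hlsConst α) * (∫⁻ t, (f t : ℝ≥0∞) ^ (2 / (2 - α))) ^ (2 - α) := by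
  have h2α : 0 < 2 - α := by linarith
  rcases eq_or_ne (∫⁻ t, (f t : ℝ≥0∞) ^ (2 / (2 - α))) ⊤ with hT | hT
  · rw [hT, ENNReal.top_rpow_of_pos h2α, ENNReal.mul_top (by simpa using hlsConst_pos hα1)]
    exact le_top
  rcases eq_or_ne (∫⁻ t, (f t : ℝ≥0∞) ^ (2 / (2 - α))) 0 with h0 | h0
  · have hf0 : ∀ᵐ t, f t = 0 := by
      rw [lintegral_eq_zero_iff (by fun_prop)] at h0
      filter_upwards [h0] with t ht
      simpa [ENNReal.rpow_eq_zero_iff, h2α] using ht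
    refine (lintegral_eq_zero_of_ae_eq_zero ?_).le.trans zero_le
    filter_upwards [hf0] with t ht
    simp [ht]
  have hM := ENNReal.toReal_pos h0 hT
  have hfM := (ENNReal.ofReal_toReal hT).symm
  set M := (∫⁻ t, (f t : ℝ≥0∞) ^ (2 / (2 - α))).toReal
  calc ∫⁻ t, ∫⁻ s, f t * f s * ‖t - s‖ₑ ^ (-α)
      ≤ 2 * ∫⁻ t, ∫⁻ s in {s | f s ≤ f t}, f t * f s * ‖t - s‖ₑ ^ (-α) :=
        lintegral_lintegral_le_two_mul_of_symm hf (by fun_prop) fun t s => by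
          rw [mul_comm (f t : ℝ≥0∞), enorm_sub_rev]
    _ ≤ 2 * (ENNReal.ofReal (hlsConst α / 2) * ENNReal.ofReal M ^ (2 - α)) := by
        gcongr
        exact lintegral_setLIntegral_le_mul_enorm_sub_rpow_le hα0 hα1 hf hM hfM
    _ = _ := by
        have := hlsConst_pos hα1
        rw [hfM, two_mul, ← add_mul, ← ENNReal.ofReal_add (by positivity) (by positivity),
          add_halves]

end HardyLittlewoodSobolev

section MeasurableSelection

variable {α : Type*} [MeasurableSpace α] {μ : Measure α} {W : ℕ → α → ℝ≥0∞}

theorem exists_measurable_isMaxOn (hW : ∀ n, Measurable (W n)) (n : ℕ) :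
    ∃ N : α → ℕ, Measurable N ∧ ∀ x, ∀ k ≤ n, W k x ≤ W (N x) x := by
  induction n with
  | zero => exact ⟨fun _ => 0, measurable_const, fun x k hk => by rw [Nat.le_zero.1 hk]⟩
  | succ n ih =>
    obtain ⟨N, hN, hmax⟩ := ih
    have hWN : Measurable fun x => W (N x) x :=
      (measurable_from_prod_countable_left (f := fun p : α × ℕ => W p.2 p.1) hW).comp
        (measurable_id.prodMk hN)
    have hS : MeasurableSet {x | W (N x) x ≤ W (n + 1) x} := measurableSet_le hWN (hW _)
    classical
    refine ⟨fun x => if W (N x) x ≤ W (n + 1) x then n + 1 else N x,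
      Measurable.ite hS measurable_const hN, fun x k hk => ?_⟩
    rcases Nat.le_succ_iff.1 hk with hk | rfl
    · dsimp only
      split_ifs with h
      exacts [(hmax x k hk).trans h, hmax x k hk]
    · dsimp only
      split_ifs with h
      exacts [le_rfl, (not_le.1 h).le]

theorem lintegral_iSup_le_of_forall_measurable (hW : ∀ n, Measurable (W n)) {K : ℝ≥0∞}
    (hK : ∀ N : α → ℕ, Measurable N → ∫⁻ x, W (N x) x ∂μ ≤ K) :
    ∫⁻ x, ⨆ n, W n x ∂μ ≤ K := by
  calc ∫⁻ x, ⨆ n, W n x ∂μ = ∫⁻ x, ⨆ n, partialSups (fun k => W k x) n ∂μ := by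
        simp only [iSup_partialSups_eq]
    _ = ⨆ n, ∫⁻ x, partialSups (fun k => W k x) n ∂μ := by
        refine lintegral_iSup (fun n => ?_) fun m n hmn x => (partialSups _).monotone hmn
        simp only [partialSups_apply]
        simpa only [← Finset.sup'_apply] using Finset.measurable_sup' _ fun k _ => hW k
    _ ≤ K := iSup_le fun n => by
        obtain ⟨N, hN, hmax⟩ := exists_measurable_isMaxOn hW n
        exact (lintegral_mono fun x => partialSups_le _ _ _ fun k hk => hmax x k hk).trans (hK N hN)

end MeasurableSelection

section Duality

theorem le_rpow_inv_of_le_mul_rpow_one_sub {J K : ℝ≥0∞} {a : ℝ} (ha : 0 < a) (hJ : J ≠ ⊤)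
    (h : J ≤ K * J ^ (1 - a)) : J ≤ K ^ a⁻¹ := by
  rcases eq_or_ne J 0 with rfl | h0
  · exact zero_le
  have hne : J ^ (1 - a) ≠ 0 := by simp [ENNReal.rpow_eq_zero_iff, h0, hJ]
  have hne' : J ^ (1 - a) ≠ ⊤ := by simp [ENNReal.rpow_eq_top_iff, h0, hJ]
  have hroot : J ^ a ≤ K := by
    refine (ENNReal.mul_le_mul_iff_left hne hne').1 ?_
    rwa [← ENNReal.rpow_add _ _ h0 hJ, add_sub_cancel, ENNReal.rpow_one]
  calc J = (J ^ a) ^ a⁻¹ := (ENNReal.rpow_rpow_inv ha.ne' J).symm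
    _ ≤ K ^ a⁻¹ := by gcongr

variable {α : Type*}

/-- The function dual to `v` in `L^p`, cut off to the set `A`: it pairs with `v` to `‖v‖ ^ p`
on `A`. -/
def dualPower (p : ℝ) (v : α → ℂ) (A : Set α) : α → ℂ :=
  A.indicator fun x => (starRingEnd ℂ) (v x) * ((‖v x‖ ^ (p - 2) : ℝ) : ℂ)

variable {p q : ℝ} {v : α → ℂ} {A : Set α}

theorem dualPower_mul (hp : 0 < p) (x : α) :
    dualPower p v A x * v x = ((A.indicator (fun x => ‖v x‖ ^ p) x : ℝ) : ℂ) := by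
  by_cases hx : x ∈ A
  · simp only [dualPower, Set.indicator_of_mem hx]
    rcases eq_or_ne (v x) 0 with h0 | h0
    · simp [h0, hp.ne']
    · have hpow : ‖v x‖ ^ p = ‖v x‖ ^ 2 * ‖v x‖ ^ (p - 2) := by
        rw [← Real.rpow_natCast, ← Real.rpow_add (norm_pos_iff.2 h0)]
        norm_num
      rw [hpow, mul_right_comm, mul_comm _ (v x), Complex.mul_conj, Complex.normSq_eq_norm_sq]
      push_cast
      ring
  · simp [dualPower, hx]

theorem norm_dualPower (hp : 1 < p) (x : α) :
    ‖dualPower p v A x‖ = A.indicator (fun x => ‖v x‖ ^ (p - 1)) x := by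
  by_cases hx : x ∈ A
  · simp only [dualPower, Set.indicator_of_mem hx]
    rw [norm_mul, RCLike.norm_conj, Complex.norm_real, Real.norm_of_nonneg (by positivity)]
    rcases eq_or_ne (v x) 0 with h0 | _
    · simp [h0, (sub_pos.2 hp).ne']
    · rw [← Real.rpow_one_add' (norm_nonneg _) (by linarith)]
      ring_nf
  · simp [dualPower, hx]

variable [MeasurableSpace α] {μ : Measure α}

theorem measurable_dualPower (hv : Measurable v) (hA : MeasurableSet A) :
    Measurable (dualPower p v A) := by
  refine Measurable.indicator ?_ hA
  exact (Complex.continuous_conj.measurable.comp hv).mul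
    (Complex.measurable_ofReal.comp (hv.norm.pow_const _))

theorem integrable_dualPower (hp : 1 < p) (hv : Measurable v) {M : ℝ} (hM : ∀ x, ‖v x‖ ≤ M)
    (hA : MeasurableSet A) (hμA : μ A ≠ ⊤) : Integrable (dualPower p v A) μ := by
  refine Integrable.mono' (g := A.indicator fun _ => M ^ (p - 1)) ?_
    (measurable_dualPower hv hA).aestronglyMeasurable (Eventually.of_forall fun x => ?_)
  · exact (integrable_indicator_iff hA).2 (integrableOn_const hμA)
  · rw [norm_dualPower hp]
    refine Set.indicator_le_indicator (Real.rpow_le_rpow (norm_nonneg _) (hM x) ?_)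
    linarith

theorem lintegral_enorm_dualPower_rpow (hpq : p.HolderConjugate q) (hA : MeasurableSet A) :
    ∫⁻ x, ‖dualPower p v A x‖ₑ ^ q ∂μ = ∫⁻ x in A, ‖v x‖ₑ ^ p ∂μ := by
  rw [← lintegral_indicator hA]
  refine lintegral_congr fun x => ?_
  rw [← ofReal_norm, norm_dualPower hpq.lt]
  by_cases hx : x ∈ A
  · rw [Set.indicator_of_mem hx, Set.indicator_of_mem hx,
      ← ENNReal.ofReal_rpow_of_nonneg (norm_nonneg _) hpq.sub_one_pos.le, ofReal_norm,
      ← ENNReal.rpow_mul, hpq.sub_one_mul_conj]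
  · simp [hx, hpq.symm.pos]

theorem setLIntegral_rpow_enorm_eq_enorm_integral (hp : 0 < p) (hv : Measurable v) {M : ℝ}
    (hM : ∀ x, ‖v x‖ ≤ M) (hA : MeasurableSet A) (hμA : μ A ≠ ⊤) :
    ∫⁻ x in A, ‖v x‖ₑ ^ p ∂μ = ‖∫ x, dualPower p v A x * v x ∂μ‖ₑ := by
  have hint : IntegrableOn (fun x => ‖v x‖ ^ p) A μ :=
    Measure.integrableOn_of_bounded (M := M ^ p) hμA (hv.norm.pow_const p).aestronglyMeasurable
      (Eventually.of_forall fun x => by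
        rw [Real.norm_of_nonneg (by positivity)]
        exact Real.rpow_le_rpow (norm_nonneg _) (hM x) hp.le)
  simp_rw [dualPower_mul hp]
  rw [integral_complex_ofReal, ← ofReal_norm, Complex.norm_real, integral_indicator hA,
    Real.norm_of_nonneg (integral_nonneg fun _ => by positivity),
    ofReal_integral_eq_lintegral_ofReal hint (Eventually.of_forall fun _ => by positivity)]
  refine lintegral_congr fun x => ?_
  rw [← ENNReal.ofReal_rpow_of_nonneg (norm_nonneg _) hp.le, ofReal_norm]

theorem lintegral_rpow_enorm_le_of_duality [SigmaFinite μ] (hpq : p.HolderConjugate q)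
    (hv : Measurable v) {M : ℝ} (hM : ∀ x, ‖v x‖ ≤ M) {K : ℝ≥0∞}
    (hK : ∀ h : α → ℂ, Measurable h → Integrable h μ →
      ‖∫ x, h x * v x ∂μ‖ₑ ≤ K * (∫⁻ x, ‖h x‖ₑ ^ q ∂μ) ^ (1 / q)) :
    ∫⁻ x, ‖v x‖ₑ ^ p ∂μ ≤ K ^ p := by
  refine lintegral_le_of_forall_fin_meas_le _ fun A hA hμA => ?_
  set J := ∫⁻ x in A, ‖v x‖ₑ ^ p ∂μ with hJ
  have hJ_top : J ≠ ⊤ := by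
    rw [hJ, setLIntegral_rpow_enorm_eq_enorm_integral hpq.pos hv hM hA hμA]
    exact enorm_ne_top
  have hself : J ≤ K * J ^ (1 - 1 / p) := by
    calc J = ‖∫ x, dualPower p v A x * v x ∂μ‖ₑ :=
          setLIntegral_rpow_enorm_eq_enorm_integral hpq.pos hv hM hA hμA
      _ ≤ _ := hK _ (measurable_dualPower hv hA) (integrable_dualPower hpq.lt hv hM hA hμA)
      _ = _ := by rw [lintegral_enorm_dualPower_rpow hpq hA, one_div, one_div,
        hpq.one_sub_inv]
  simpa using le_rpow_inv_of_le_mul_rpow_one_sub hpq.one_div_pos hJ_top hself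

end Duality

section TTStar

open scoped ComplexConjugate

variable {Ω : Type*} [MeasurableSpace Ω] {ν μ : Measure Ω} [IsFiniteMeasure ν] {k : ℝ → Ω → ℂ}
  {h : ℝ → ℂ} {κ : ℝ≥0∞} {α : ℝ}

theorem integrable_mul_conj_mul (hk : Measurable (Function.uncurry k))
    (hk1 : ∀ t ω, ‖k t ω‖ ≤ 1) (hm : Measurable h) (hi : Integrable h) :
    Integrable (Function.uncurry fun (ω : Ω) (x : ℝ × ℝ) =>
      (h x.1 * k x.1 ω) * conj (h x.2 * k x.2 ω)) (ν.prod (volume.prod volume)) := by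
  have hmeas : Measurable fun y : Ω × ℝ => h y.2 * k y.2 y.1 :=
    (hm.comp measurable_snd).mul (hk.comp measurable_swap)
  refine ((integrable_const (1 : ℝ)).mul_prod (hi.norm.mul_prod hi.norm)).mono' ?_
    (Eventually.of_forall ?_)
  · exact ((hmeas.comp (g := fun y : Ω × ℝ => h y.2 * k y.2 y.1)
        (f := fun y : Ω × ℝ × ℝ => (y.1, y.2.1)) (by fun_prop)).mul
      (Complex.continuous_conj.measurable.comp (hmeas.comp (f := fun y : Ω × ℝ × ℝ => (y.1, y.2.2))
        (by fun_prop)))).aestronglyMeasurable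
  · rintro ⟨ω, x⟩
    simp only [Function.uncurry, norm_mul, RCLike.norm_conj, one_mul]
    gcongr
    exacts [mul_le_of_le_one_right (norm_nonneg _) (hk1 _ _),
      mul_le_of_le_one_right (norm_nonneg _) (hk1 _ _)]

theorem lintegral_enorm_integral_mul_sq_le (hk : Measurable (Function.uncurry k))
    (hk1 : ∀ t ω, ‖k t ω‖ ≤ 1) (hm : Measurable h) (hi : Integrable h) :
    ∫⁻ ω, ‖∫ t, h t * k t ω‖ₑ ^ 2 ∂ν ≤
      ∫⁻ x : ℝ × ℝ, ‖h x.1‖ₑ * ‖h x.2‖ₑ * ‖∫ ω, k x.1 ω * conj (k x.2 ω) ∂ν‖ₑ := by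
  have hint := integrable_mul_conj_mul (ν := ν) hk hk1 hm hi
  have hsq (ω : Ω) : ((‖∫ t, h t * k t ω‖ ^ 2 : ℝ) : ℂ) =
      ∫ x : ℝ × ℝ, (h x.1 * k x.1 ω) * conj (h x.2 * k x.2 ω) := by
    rw [Measure.volume_eq_prod, integral_prod_mul (fun t => h t * k t ω)
      (fun t => conj (h t * k t ω)), integral_conj, Complex.mul_conj, Complex.normSq_eq_norm_sq]
  have hsq_int : Integrable (fun ω => ‖∫ t, h t * k t ω‖ ^ 2) ν :=
    hint.integral_prod_left.re.congr (Eventually.of_forall fun ω => by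
      simp only [Function.uncurry_apply_pair, ← Measure.volume_eq_prod, ← hsq]
      exact Complex.ofReal_re _)
  calc ∫⁻ ω, ‖∫ t, h t * k t ω‖ₑ ^ 2 ∂ν
      = ‖∫ ω, ((‖∫ t, h t * k t ω‖ ^ 2 : ℝ) : ℂ) ∂ν‖ₑ := by
        rw [integral_complex_ofReal, ← ofReal_norm, Complex.norm_real,
          Real.norm_of_nonneg (integral_nonneg fun _ => by positivity),
          ofReal_integral_eq_lintegral_ofReal hsq_int (Eventually.of_forall fun _ => by positivity)]
        simp only [ENNReal.ofReal_pow (norm_nonneg _), ofReal_norm]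
    _ = ‖∫ x : ℝ × ℝ, ∫ ω, (h x.1 * k x.1 ω) * conj (h x.2 * k x.2 ω) ∂ν‖ₑ := by
        simp_rw [hsq]
        rw [Measure.volume_eq_prod, integral_integral_swap hint]
    _ ≤ ∫⁻ x : ℝ × ℝ, ‖∫ ω, (h x.1 * k x.1 ω) * conj (h x.2 * k x.2 ω) ∂ν‖ₑ :=
        enorm_integral_le_lintegral_enorm _
    _ = _ := by
        refine lintegral_congr fun x => ?_
        have hfactor (ω : Ω) : (h x.1 * k x.1 ω) * conj (h x.2 * k x.2 ω) =
            h x.1 * conj (h x.2) * (k x.1 ω * conj (k x.2 ω)) := by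
          rw [map_mul, mul_mul_mul_comm]
        simp only [hfactor]
        rw [integral_const_mul, enorm_mul, enorm_mul, RCLike.enorm_conj]

theorem lintegral_enorm_integral_mul_sq_le_of_decay (hα0 : 0 < α) (hα1 : α < 1)
    (hk : Measurable (Function.uncurry k)) (hk1 : ∀ t ω, ‖k t ω‖ ≤ 1)
    (hdecay : ∀ t s, ‖∫ ω, k t ω * conj (k s ω) ∂ν‖ₑ ≤ κ * ‖t - s‖ₑ ^ (-α))
    (hm : Measurable h) (hi : Integrable h) :
    ∫⁻ ω, ‖∫ t, h t * k t ω‖ₑ ^ 2 ∂ν ≤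
      κ * ENNReal.ofReal (hlsConst α) * (∫⁻ t, ‖h t‖ₑ ^ (2 / (2 - α))) ^ (2 - α) := by
  calc ∫⁻ ω, ‖∫ t, h t * k t ω‖ₑ ^ 2 ∂ν
      ≤ ∫⁻ x : ℝ × ℝ, κ * (‖h x.1‖ₑ * ‖h x.2‖ₑ * ‖x.1 - x.2‖ₑ ^ (-α)) := by
        refine (lintegral_enorm_integral_mul_sq_le hk hk1 hm hi).trans (lintegral_mono fun x => ?_)
        rw [mul_left_comm]
        gcongr
        exact hdecay _ _
    _ = κ * ∫⁻ t, ∫⁻ s, ‖h t‖ₑ * ‖h s‖ₑ * ‖t - s‖ₑ ^ (-α) := by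
        rw [lintegral_const_mul _ (by fun_prop), Measure.volume_eq_prod,
          lintegral_prod _ (by fun_prop)]
    _ ≤ _ := by
        rw [mul_assoc]
        gcongr
        exact lintegral_lintegral_mul_enorm_sub_rpow_le (f := fun t => ‖h t‖₊) hα0 hα1 hm.nnnorm

theorem enorm_integral_mul_integral_le [SFinite μ] (hk : Measurable (Function.uncurry k))
    (hk1 : ∀ t ω, ‖k t ω‖ ≤ 1) (hm : Measurable h) (hi : Integrable h) {g : Ω → ℂ}
    (hg : Measurable g) (hgi : Integrable g μ) :
    ‖∫ t, h t * ∫ ω, k t ω * g ω ∂μ‖ₑ ≤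
      (∫⁻ ω, ‖∫ t, h t * k t ω‖ₑ ^ 2 ∂μ) ^ (1 / 2 : ℝ) * eLpNorm g 2 μ := by
  have hB : Measurable fun ω => ∫ t, h t * k t ω :=
    ((hm.comp measurable_fst).mul hk).stronglyMeasurable.integral_prod_left'.measurable
  have hprod : Integrable (Function.uncurry fun (t : ℝ) (ω : Ω) => h t * (k t ω * g ω))
      (volume.prod μ) := by
    refine (hi.norm.mul_prod hgi.norm).mono'
      ((hm.comp measurable_fst).mul (hk.mul (hg.comp measurable_snd))).aestronglyMeasurable
      (Eventually.of_forall fun x => ?_)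
    simp only [Function.uncurry, norm_mul]
    gcongr
    exact mul_le_of_le_one_left (norm_nonneg _) (hk1 _ _)
  calc ‖∫ t, h t * ∫ ω, k t ω * g ω ∂μ‖ₑ = ‖∫ ω, (∫ t, h t * k t ω) * g ω ∂μ‖ₑ := by
        simp_rw [← integral_const_mul, ← integral_mul_const]
        rw [integral_integral_swap hprod]
        simp_rw [mul_assoc]
    _ ≤ ∫⁻ ω, ‖∫ t, h t * k t ω‖ₑ * ‖g ω‖ₑ ∂μ := by
        simp_rw [← enorm_mul]
        exact enorm_integral_le_lintegral_enorm _
    _ ≤ (∫⁻ ω, ‖∫ t, h t * k t ω‖ₑ ^ (2 : ℝ) ∂μ) ^ (1 / 2 : ℝ) *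
          (∫⁻ ω, ‖g ω‖ₑ ^ (2 : ℝ) ∂μ) ^ (1 / 2 : ℝ) :=
        ENNReal.lintegral_mul_le_Lp_mul_Lq μ .two_two hB.enorm.aemeasurable
          hg.enorm.aemeasurable
    _ = _ := by
        rw [eLpNorm_eq_lintegral_rpow_enorm_toReal two_ne_zero ENNReal.ofNat_ne_top,
          ENNReal.toReal_ofNat]
        simp only [ENNReal.rpow_ofNat]

theorem lintegral_enorm_integral_rpow_le_of_decay (hα0 : 0 < α) (hα1 : α < 1) (hμν : μ ≤ ν)
    (hk : Measurable (Function.uncurry k)) (hk1 : ∀ t ω, ‖k t ω‖ ≤ 1)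
    (hdecay : ∀ t s, ‖∫ ω, k t ω * conj (k s ω) ∂ν‖ₑ ≤ κ * ‖t - s‖ₑ ^ (-α))
    {g : Ω → ℂ} (hg : Measurable g) (hgi : Integrable g μ) :
    ∫⁻ t, ‖∫ ω, k t ω * g ω ∂μ‖ₑ ^ (2 / α) ≤
      ((κ * ENNReal.ofReal (hlsConst α)) ^ (1 / 2 : ℝ) * eLpNorm g 2 μ) ^ (2 / α) := by
  have : IsFiniteMeasure μ := isFiniteMeasure_of_le ν hμν
  have : 0 < 2 - α := by linarith
  have hconj : (2 / α).HolderConjugate (2 / (2 - α)) := by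
    refine Real.holderConjugate_iff.2 ⟨(one_lt_div hα0).2 (by linarith), ?_⟩
    simp only [inv_div]
    ring
  have hbound (t : ℝ) : ‖∫ ω, k t ω * g ω ∂μ‖ ≤ ∫ ω, ‖g ω‖ ∂μ := by
    refine norm_integral_le_of_norm_le hgi.norm (Eventually.of_forall fun ω => ?_)
    rw [norm_mul]
    exact mul_le_of_le_one_left (norm_nonneg _) (hk1 _ _)
  have hmeas : Measurable fun t => ∫ ω, k t ω * g ω ∂μ :=
    (hk.mul (hg.comp measurable_snd)).stronglyMeasurable.integral_prod_right'.measurable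
  refine lintegral_rpow_enorm_le_of_duality hconj hmeas hbound fun h hm hi => ?_
  calc ‖∫ t, h t * ∫ ω, k t ω * g ω ∂μ‖ₑ
      ≤ (∫⁻ ω, ‖∫ t, h t * k t ω‖ₑ ^ 2 ∂μ) ^ (1 / 2 : ℝ) * eLpNorm g 2 μ :=
        enorm_integral_mul_integral_le hk hk1 hm hi hg hgi
    _ ≤ (κ * ENNReal.ofReal (hlsConst α) * (∫⁻ t, ‖h t‖ₑ ^ (2 / (2 - α))) ^ (2 - α)) ^ (1 / 2 : ℝ) *
          eLpNorm g 2 μ := by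
        gcongr
        exact (lintegral_mono' hμν le_rfl).trans
          (lintegral_enorm_integral_mul_sq_le_of_decay hα0 hα1 hk hk1 hdecay hm hi)
    _ = _ := by
        rw [ENNReal.mul_rpow_of_nonneg _ _ (by norm_num), ← ENNReal.rpow_mul, mul_right_comm,
          one_div_div, mul_one_div]

end TTStar

section DispersiveDecay

open scoped ComplexConjugate

variable {V : Type*} [NormedAddCommGroup V] [InnerProductSpace ℝ V] {φ : V → ℝ}

/-- The wave `exp (i (τ φ(ξ) + 2π ⟨ξ, x⟩))` of frequency `ξ` at time `τ` and position `x`, for the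
dispersion relation `φ`. -/
def planeWave (φ : V → ℝ) (τ : ℝ) (x ξ : V) : ℂ :=
  cexp (((τ * φ ξ + 2 * π * inner ℝ ξ x : ℝ) : ℂ) * I)

theorem norm_planeWave (τ : ℝ) (x ξ : V) : ‖planeWave φ τ x ξ‖ = 1 :=
  Complex.norm_exp_ofReal_mul_I _

theorem planeWave_mul_conj (τ τ' : ℝ) (x x' ξ : V) :
    planeWave φ τ x ξ * conj (planeWave φ τ' x' ξ) = planeWave φ (τ - τ') (x - x') ξ := by
  simp only [planeWave]
  rw [← Complex.exp_conj, ← Complex.exp_add, map_mul, Complex.conj_ofReal, Complex.conj_I,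
    inner_sub_right]
  push_cast
  ring_nf

theorem planeWave_const_mul (c τ : ℝ) (x ξ : V) :
    planeWave (fun ξ => c * φ ξ) τ x ξ = planeWave φ (c * τ) x ξ := by
  simp only [planeWave]
  ring_nf

theorem continuous_planeWave (hφ : Continuous φ) :
    Continuous fun p : ℝ × V × V => planeWave φ p.1 p.2.1 p.2.2 := by
  unfold planeWave
  fun_prop

variable [MeasurableSpace V] {κ : ℝ≥0∞} {α : ℝ} {ν : Measure V}

/-- The dispersive estimate on the frequency measure `ν`: the kernel at time `τ` of the propagator
with dispersion relation `φ` is bounded by `κ |τ| ^ (-α)`, uniformly in space. -/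
def DispersiveDecay (φ : V → ℝ) (ν : Measure V) (κ : ℝ≥0∞) (α : ℝ) : Prop :=
  ∀ (τ : ℝ) (x : V), ‖∫ ξ, planeWave φ τ x ξ ∂ν‖ₑ ≤ κ * ‖τ‖ₑ ^ (-α)

theorem DispersiveDecay.const_mul (h : DispersiveDecay φ ν κ α) {c : ℝ} (hc : c ≠ 0) :
    DispersiveDecay (fun ξ => c * φ ξ) ν (κ * ‖c‖ₑ ^ (-α)) α := fun τ x => by
  simp only [planeWave_const_mul]
  refine (h (c * τ) x).trans_eq ?_
  rw [enorm_mul, mul_assoc]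
  rcases eq_or_ne τ 0 with rfl | hτ
  · rw [ENNReal.mul_rpow_of_ne_top enorm_ne_top enorm_ne_top]
  · rw [ENNReal.mul_rpow_of_ne_zero (enorm_ne_zero.2 hc) (enorm_ne_zero.2 hτ)]

variable [BorelSpace V]

theorem integrable_planeWave [IsFiniteMeasure ν] (hφ : Continuous φ) (τ : ℝ) (x : V) :
    Integrable (planeWave φ τ x) ν :=
  .of_bound ((continuous_planeWave hφ).comp (f := fun ξ => (τ, x, ξ))
    (by fun_prop)).aestronglyMeasurable 1 (Eventually.of_forall fun ξ => (norm_planeWave τ x ξ).le)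

theorem DispersiveDecay.sum {ι : Type*} {s : Finset ι} {ν : ι → Measure V} {κ : ι → ℝ≥0∞}
    (hφ : Continuous φ) (hν : ∀ k ∈ s, IsFiniteMeasure (ν k))
    (h : ∀ k ∈ s, DispersiveDecay φ (ν k) (κ k) α) :
    DispersiveDecay φ (∑ k ∈ s, ν k) (∑ k ∈ s, κ k) α := fun τ x => by
  rw [integral_finsetSum_measure fun k hk => have := hν k hk; integrable_planeWave hφ τ x,
    Finset.sum_mul]
  exact (enorm_sum_le _ _).trans (Finset.sum_le_sum fun k hk => h k hk τ x)

end DispersiveDecay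

section MaximalStrichartz

theorem iSup_enorm_eq_iSup_denseSeq {X E : Type*} [TopologicalSpace X]
    [TopologicalSpace.SeparableSpace X] [Nonempty X] [TopologicalSpace E] [ContinuousENorm E]
    {w : X → E} (hw : Continuous w) :
    ⨆ x, ‖w x‖ₑ = ⨆ n, ‖w (TopologicalSpace.denseSeq X n)‖ₑ := by
  refine le_antisymm (iSup_le fun x => ?_) (iSup_le fun n => le_iSup (fun x => ‖w x‖ₑ) _)
  exact (TopologicalSpace.denseRange_denseSeq X).induction_on x
    (isClosed_le hw.enorm continuous_const)
    (le_iSup fun n => ‖w (TopologicalSpace.denseSeq X n)‖ₑ)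

variable {V : Type*} [NormedAddCommGroup V] [InnerProductSpace ℝ V] [MeasurableSpace V]
  [BorelSpace V] [FiniteDimensional ℝ V] {φ : V → ℝ} {G : V → ℂ}

/-- The solution at time `τ` of the dispersive equation with dispersion relation `φ` whose initial
datum has Fourier transform `G`. -/
def evolution (φ : V → ℝ) (G : V → ℂ) (τ : ℝ) (x : V) : ℂ :=
  ∫ ξ, planeWave φ τ x ξ * G ξ

theorem continuous_evolution (hφ : Continuous φ) (hG : Integrable G) (τ : ℝ) :
    Continuous (evolution φ G τ) := by
  have hwave := continuous_planeWave hφ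
  refine continuous_of_dominated (bound := fun ξ => ‖G ξ‖) (fun x => ?_) (fun x => ?_) hG.norm ?_
  · exact (hwave.comp (f := fun ξ => (τ, x, ξ)) (by fun_prop)).aestronglyMeasurable.mul
      hG.aestronglyMeasurable
  · exact Eventually.of_forall fun ξ => by rw [norm_mul, norm_planeWave, one_mul]
  · exact Eventually.of_forall fun ξ =>
      (hwave.comp (f := fun x => (τ, x, ξ)) (by fun_prop)).mul continuous_const

theorem measurable_evolution (hφ : Continuous φ) (hG : Measurable G) :
    Measurable fun p : ℝ × V => evolution φ G p.1 p.2 := by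
  have hwave : Measurable fun p : (ℝ × V) × V => planeWave φ p.1.1 p.1.2 p.2 :=
    ((continuous_planeWave hφ).comp (f := fun p : (ℝ × V) × V => (p.1.1, p.1.2, p.2))
      (by fun_prop)).measurable
  exact (hwave.mul (hG.comp measurable_snd)).stronglyMeasurable.integral_prod_right'.measurable

theorem enorm_evolution_le (τ : ℝ) (x : V) : ‖evolution φ G τ x‖ₑ ≤ eLpNorm G 1 volume := by
  rw [eLpNorm_one_eq_lintegral_enorm]
  refine (enorm_integral_le_lintegral_enorm _).trans_eq (lintegral_congr fun ξ => ?_)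
  rw [enorm_mul, ← ofReal_norm, norm_planeWave, ENNReal.ofReal_one, one_mul]

variable {κ : ℝ≥0∞} {α : ℝ} {ν : Measure V} [IsFiniteMeasure ν] {S : Set V}

theorem DispersiveDecay.lintegral_enorm_evolution_comp_rpow_le (h : DispersiveDecay φ ν κ α)
    (hφ : Continuous φ) (hα0 : 0 < α) (hα1 : α < 1) (hS : volume.restrict S ≤ ν)
    (hG : Measurable G) (hGi : Integrable G) (hGS : ∀ ξ, ξ ∉ S → G ξ = 0) {X : ℝ → V}
    (hX : Measurable X) :
    ∫⁻ t, ‖evolution φ G t (X t)‖ₑ ^ (2 / α) ≤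
      ((κ * ENNReal.ofReal (hlsConst α)) ^ (1 / 2 : ℝ) * eLpNorm G 2 volume) ^ (2 / α) := by
  have hwave : Measurable (Function.uncurry fun t ξ => planeWave φ t (X t) ξ) :=
    (continuous_planeWave hφ).measurable.comp
      (f := fun p : ℝ × V => (p.1, X p.1, p.2)) (by fun_prop)
  have hdecay (t s : ℝ) : ‖∫ ξ, planeWave φ t (X t) ξ *
      (starRingEnd ℂ) (planeWave φ s (X s) ξ) ∂ν‖ₑ ≤ κ * ‖t - s‖ₑ ^ (-α) := by
    simp only [planeWave_mul_conj]
    exact h _ _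
  calc ∫⁻ t, ‖evolution φ G t (X t)‖ₑ ^ (2 / α)
      = ∫⁻ t, ‖∫ ξ in S, planeWave φ t (X t) ξ * G ξ‖ₑ ^ (2 / α) := by
        refine lintegral_congr fun t => ?_
        rw [evolution, setIntegral_eq_integral_of_forall_compl_eq_zero fun ξ hξ => by
          rw [hGS ξ hξ, mul_zero]]
    _ ≤ ((κ * ENNReal.ofReal (hlsConst α)) ^ (1 / 2 : ℝ) *
          eLpNorm G 2 (volume.restrict S)) ^ (2 / α) :=
        lintegral_enorm_integral_rpow_le_of_decay hα0 hα1 hS hwave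
          (fun t ξ => (norm_planeWave t (X t) ξ).le) hdecay hG hGi.integrableOn
    _ ≤ _ := by
        gcongr
        exact Measure.restrict_le_self

theorem DispersiveDecay.eLpNorm_iSup_enorm_evolution_le (h : DispersiveDecay φ ν κ α)
    (hφ : Continuous φ) (hα0 : 0 < α) (hα1 : α < 1) (hS : volume.restrict S ≤ ν)
    (hG : Measurable G) (hGi : Integrable G) (hGS : ∀ ξ, ξ ∉ S → G ξ = 0) :
    eLpNorm (fun t => ⨆ x, ‖evolution φ G t x‖ₑ) (ENNReal.ofReal (2 / α)) volume ≤
      (κ * ENNReal.ofReal (hlsConst α)) ^ (1 / 2 : ℝ) * eLpNorm G 2 volume := by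
  have h2α : 0 < 2 / α := by positivity
  have hsup (t : ℝ) : (⨆ x, ‖evolution φ G t x‖ₑ) ^ (2 / α) =
      ⨆ n, ‖evolution φ G t (TopologicalSpace.denseSeq V n)‖ₑ ^ (2 / α) := by
    rw [iSup_enorm_eq_iSup_denseSeq (continuous_evolution hφ hGi t)]
    exact (ENNReal.orderIsoRpow (2 / α) h2α).map_iSup _
  rw [eLpNorm_eq_lintegral_rpow_enorm_toReal (by simpa using h2α) ENNReal.ofReal_ne_top,
    ENNReal.toReal_ofReal h2α.le, one_div, ENNReal.rpow_inv_le_iff h2α]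
  simp only [enorm_eq_self, hsup]
  refine lintegral_iSup_le_of_forall_measurable (fun n => ?_) fun N hN => ?_
  · exact ((measurable_evolution hφ hG).comp
      (measurable_id.prodMk measurable_const)).enorm.pow_const _
  · exact h.lintegral_enorm_evolution_comp_rpow_le hφ hα0 hα1 hS hG hGi hGS
      (X := fun t => TopologicalSpace.denseSeq V (N t))
      ((measurable_from_nat).comp hN)

end MaximalStrichartz

section VanDerCorput

variable {θ θ' θ'' : ℝ → ℝ} {a b δ l : ℝ}

theorem norm_cexp_I_mul_ofReal (x : ℝ) : ‖cexp (I * x)‖ = 1 := by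
  rw [mul_comm, Complex.norm_exp_ofReal_mul_I]

theorem continuousOn_cexp_I_mul (hθ : ∀ s ∈ Set.Icc a b, HasDerivAt θ (θ' s) s) :
    ContinuousOn (fun s => cexp (I * θ s)) (Set.Icc a b) :=
  (by fun_prop : Continuous fun x : ℝ => cexp (I * x)).comp_continuousOn
    (HasDerivAt.continuousOn hθ)

theorem intervalIntegrable_cexp_I_mul (hθ : ∀ s ∈ Set.Icc a b, HasDerivAt θ (θ' s) s)
    (hab : a ≤ b) : IntervalIntegrable (fun s => cexp (I * θ s)) volume a b :=
  (by simpa only [Set.uIcc_of_le hab] using continuousOn_cexp_I_mul hθ :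
    ContinuousOn _ (Set.uIcc a b)).intervalIntegrable

theorem integral_cexp_I_mul_eq_integral_by_parts {w w' : ℝ → ℝ} (hab : a ≤ b)
    (hθ : ∀ s ∈ Set.Icc a b, HasDerivAt θ (θ' s) s) (hθ' : ContinuousOn θ' (Set.Icc a b))
    (hw : ∀ s ∈ Set.Icc a b, HasDerivAt w (w' s) s) (hw' : ContinuousOn w' (Set.Icc a b))
    (hwθ : ∀ s ∈ Set.Icc a b, w s * θ' s = 1) :
    ∫ s in a..b, cexp (I * θ s) = -I * w b * cexp (I * θ b) - -I * w a * cexp (I * θ a) -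
      ∫ s in a..b, -I * w' s * cexp (I * θ s) := by
  have hdθ (s : ℝ) (hs : s ∈ Set.uIcc a b) :
      HasDerivAt (fun s => cexp (I * θ s)) (cexp (I * θ s) * (I * θ' s)) s := by
    rw [Set.uIcc_of_le hab] at hs
    exact ((hθ s hs).ofReal_comp.const_mul I).cexp
  have hdw (s : ℝ) (hs : s ∈ Set.uIcc a b) :
      HasDerivAt (fun s => -I * (w s : ℂ)) (-I * (w' s : ℂ)) s := by
    rw [Set.uIcc_of_le hab] at hs
    exact (hw s hs).ofReal_comp.const_mul (-I)
  rw [← intervalIntegral.integral_mul_deriv_eq_deriv_mul hdw hdθ]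
  · refine intervalIntegral.integral_congr fun s hs => ?_
    rw [Set.uIcc_of_le hab] at hs
    have hone : (w s : ℂ) * θ' s = 1 := mod_cast hwθ s hs
    linear_combination (-cexp (I * θ s)) * hone + (w s * θ' s * cexp (I * θ s)) * I_mul_I
  all_goals refine ContinuousOn.intervalIntegrable ?_; rw [Set.uIcc_of_le hab]
  · exact continuousOn_const.mul (Complex.continuous_ofReal.comp_continuousOn hw')
  · exact (continuousOn_cexp_I_mul hθ).mul
      (continuousOn_const.mul (Complex.continuous_ofReal.comp_continuousOn hθ'))

theorem norm_integral_cexp_I_mul_le_of_le_deriv (hab : a ≤ b) (hδ : 0 < δ)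
    (hθ : ∀ s ∈ Set.Icc a b, HasDerivAt θ (θ' s) s)
    (hθ' : ∀ s ∈ Set.Icc a b, HasDerivAt θ' (θ'' s) s) (hθ'' : ContinuousOn θ'' (Set.Icc a b))
    (hconvex : ∀ s ∈ Set.Icc a b, 0 ≤ θ'' s) (hd : ∀ s ∈ Set.Icc a b, δ ≤ θ' s) :
    ‖∫ s in a..b, cexp (I * θ s)‖ ≤ 2 / δ := by
  have hpos (s) (hs : s ∈ Set.Icc a b) : 0 < θ' s := hδ.trans_le (hd s hs)
  have hcθ' : ContinuousOn θ' (Set.Icc a b) := HasDerivAt.continuousOn hθ'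
  have hw (s) (hs : s ∈ Set.Icc a b) :
      HasDerivAt (fun s => (θ' s)⁻¹) (-θ'' s / θ' s ^ 2) s := (hθ' s hs).inv (hpos s hs).ne'
  have hw' : ContinuousOn (fun s => -θ'' s / θ' s ^ 2) (Set.Icc a b) :=
    hθ''.neg.div (hcθ'.pow 2) fun s hs => pow_ne_zero 2 (hpos s hs).ne'
  have hw'' : ContinuousOn (fun s => -θ'' s / θ' s ^ 2) (Set.uIcc a b) := by
    rwa [Set.uIcc_of_le hab]
  have hvar : ‖∫ s in a..b, -I * ((-θ'' s / θ' s ^ 2 : ℝ) : ℂ) * cexp (I * θ s)‖ ≤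
      (θ' a)⁻¹ - (θ' b)⁻¹ := by
    calc _ ≤ ∫ s in a..b, -(-θ'' s / θ' s ^ 2) := by
          refine intervalIntegral.norm_integral_le_of_norm_le hab
            (Eventually.of_forall fun s hs => ?_) hw''.neg.intervalIntegrable
          have hs' := Set.Ioc_subset_Icc_self hs
          rw [norm_mul, norm_mul, norm_cexp_I_mul_ofReal, norm_neg, norm_I, one_mul, mul_one,
            Complex.norm_real, Real.norm_of_nonpos]
          exact div_nonpos_of_nonpos_of_nonneg (neg_nonpos.2 (hconvex s hs')) (sq_nonneg _)
      _ = _ := by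
          rw [intervalIntegral.integral_neg, intervalIntegral.integral_eq_sub_of_hasDerivAt
            (by rwa [Set.uIcc_of_le hab]) hw''.intervalIntegrable]
          ring
  have hboundary (s) (hs : s ∈ Set.Icc a b) :
      ‖-I * (((θ' s)⁻¹ : ℝ) : ℂ) * cexp (I * θ s)‖ = (θ' s)⁻¹ := by
    rw [norm_mul, norm_mul, norm_cexp_I_mul_ofReal, norm_neg, norm_I, one_mul, mul_one,
      Complex.norm_real, Real.norm_of_nonneg (inv_nonneg.2 (hpos s hs).le)]
  have ha := Set.left_mem_Icc.2 hab
  have hb := Set.right_mem_Icc.2 hab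
  rw [integral_cexp_I_mul_eq_integral_by_parts hab hθ hcθ' hw hw'
    fun s hs => inv_mul_cancel₀ (hpos s hs).ne']
  calc _ ≤ (θ' b)⁻¹ + (θ' a)⁻¹ + ((θ' a)⁻¹ - (θ' b)⁻¹) := by
        refine (norm_sub_le _ _).trans (add_le_add ((norm_sub_le _ _).trans_eq ?_) hvar)
        rw [hboundary a ha, hboundary b hb]
    _ = 2 * (θ' a)⁻¹ := by ring
    _ ≤ 2 / δ := by
        rw [div_eq_mul_inv]
        gcongr
        exact hd a ha

theorem norm_integral_cexp_I_mul_le_abs_sub (a b : ℝ) :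
    ‖∫ s in a..b, cexp (I * θ s)‖ ≤ |b - a| := by
  simpa using intervalIntegral.norm_integral_le_of_norm_le_const
    (f := fun s => cexp (I * θ s)) (C := 1) fun s _ => (norm_cexp_I_mul_ofReal _).le

theorem mul_sub_le_of_le_deriv (hθ' : ∀ s ∈ Set.Icc a b, HasDerivAt θ' (θ'' s) s)
    (hl : ∀ s ∈ Set.Icc a b, l ≤ θ'' s) {s : ℝ} (hs : s ∈ Set.Icc a b) :
    l * (s - a) ≤ θ' s - θ' a :=
  (convex_Icc a b).mul_sub_le_image_sub_of_le_deriv (HasDerivAt.continuousOn hθ')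
    (fun t ht => (hθ' t (interior_subset ht)).differentiableAt.differentiableWithinAt)
    (fun t ht => by
      rw [(hθ' t (interior_subset ht)).deriv]
      exact hl t (interior_subset ht))
    a (Set.left_mem_Icc.2 (hs.1.trans hs.2)) s hs hs.1

theorem norm_integral_cexp_I_mul_le_of_nonneg_deriv_left (hab : a ≤ b) (hl0 : 0 < l)
    (hθ : ∀ s ∈ Set.Icc a b, HasDerivAt θ (θ' s) s)
    (hθ' : ∀ s ∈ Set.Icc a b, HasDerivAt θ' (θ'' s) s) (hθ'' : ContinuousOn θ'' (Set.Icc a b))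
    (hl : ∀ s ∈ Set.Icc a b, l ≤ θ'' s) (ha : 0 ≤ θ' a) :
    ‖∫ s in a..b, cexp (I * θ s)‖ ≤ 3 / √l := by
  have hsl : 0 < √l := Real.sqrt_pos.2 hl0
  rcases le_or_gt (b - a) (1 / √l) with hshort | hlong
  · refine (norm_integral_cexp_I_mul_le_abs_sub a b).trans ?_
    rw [abs_of_nonneg (sub_nonneg.2 hab)]
    refine hshort.trans ?_
    gcongr
    norm_num
  set d := a + 1 / √l with hd
  have had : a ≤ d := le_add_of_nonneg_right (by positivity)
  have hdb : d ≤ b := by linarith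
  have hsub : Set.Icc d b ⊆ Set.Icc a b := Set.Icc_subset_Icc_left had
  have hnear : ‖∫ s in a..d, cexp (I * θ s)‖ ≤ 1 / √l := by
    refine (norm_integral_cexp_I_mul_le_abs_sub a d).trans_eq ?_
    rw [hd, add_sub_cancel_left, abs_of_pos (by positivity)]
  have hfast (s) (hs : s ∈ Set.Icc d b) : √l ≤ θ' s := by
    have hgrow := mul_sub_le_of_le_deriv hθ' hl (hsub hs)
    calc √l = l * (1 / √l) := by rw [mul_one_div, Real.div_sqrt]
      _ ≤ l * (s - a) := by gcongr; linarith [hs.1]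
      _ ≤ θ' s := by linarith
  have hfar := norm_integral_cexp_I_mul_le_of_le_deriv hdb hsl (fun s hs => hθ s (hsub hs))
    (fun s hs => hθ' s (hsub hs)) (hθ''.mono hsub) (fun s hs => hl0.le.trans (hl s (hsub hs))) hfast
  rw [← intervalIntegral.integral_add_adjacent_intervals (b := d)
    (intervalIntegrable_cexp_I_mul (fun s hs => hθ s (Set.Icc_subset_Icc_right hdb hs)) had)
    (intervalIntegrable_cexp_I_mul (fun s hs => hθ s (hsub hs)) hdb)]
  calc _ ≤ 1 / √l + 2 / √l := (norm_add_le _ _).trans (add_le_add hnear hfar)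
    _ = 3 / √l := by ring

theorem norm_integral_cexp_I_mul_le_of_nonpos_deriv_right (hab : a ≤ b) (hl0 : 0 < l)
    (hθ : ∀ s ∈ Set.Icc a b, HasDerivAt θ (θ' s) s)
    (hθ' : ∀ s ∈ Set.Icc a b, HasDerivAt θ' (θ'' s) s) (hθ'' : ContinuousOn θ'' (Set.Icc a b))
    (hl : ∀ s ∈ Set.Icc a b, l ≤ θ'' s) (hb : θ' b ≤ 0) :
    ‖∫ s in a..b, cexp (I * θ s)‖ ≤ 3 / √l := by
  have hmem (s) (hs : s ∈ Set.Icc (-b) (-a)) : -s ∈ Set.Icc a b :=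
    ⟨le_neg_of_le_neg hs.2, neg_le_of_neg_le hs.1⟩
  have hrefl := norm_integral_cexp_I_mul_le_of_nonneg_deriv_left (θ := fun s => θ (-s))
    (θ' := fun s => -θ' (-s)) (θ'' := fun s => θ'' (-s)) (neg_le_neg hab) hl0
    (fun s hs => by simpa [Function.comp_def] using (hθ (-s) (hmem s hs)).comp s (hasDerivAt_neg s))
    (fun s hs => by
      simpa [Function.comp_def] using ((hθ' (-s) (hmem s hs)).comp s (hasDerivAt_neg s)).fun_neg)
    (hθ''.comp continuous_neg.continuousOn hmem) (fun s hs => hl _ (hmem s hs)) (by simpa using hb)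
  rw [intervalIntegral.integral_comp_neg (fun s => cexp (I * θ s))] at hrefl
  simpa using hrefl

theorem norm_integral_cexp_I_mul_le_of_le_deriv2 (hab : a ≤ b) (hl0 : 0 < l)
    (hθ : ∀ s ∈ Set.Icc a b, HasDerivAt θ (θ' s) s)
    (hθ' : ∀ s ∈ Set.Icc a b, HasDerivAt θ' (θ'' s) s) (hθ'' : ContinuousOn θ'' (Set.Icc a b))
    (hl : ∀ s ∈ Set.Icc a b, l ≤ θ'' s) :
    ‖∫ s in a..b, cexp (I * θ s)‖ ≤ 6 / √l := by
  have hle : 3 / √l ≤ 6 / √l := by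
    gcongr
    norm_num
  rcases le_total 0 (θ' a) with ha | ha
  · exact (norm_integral_cexp_I_mul_le_of_nonneg_deriv_left hab hl0 hθ hθ' hθ'' hl ha).trans hle
  rcases le_total (θ' b) 0 with hb | hb
  · exact (norm_integral_cexp_I_mul_le_of_nonpos_deriv_right hab hl0 hθ hθ' hθ'' hl hb).trans hle
  obtain ⟨c, hc, hc0⟩ :=
    intermediate_value_Icc hab (HasDerivAt.continuousOn hθ') ⟨ha, hb⟩
  have hleft : Set.Icc a c ⊆ Set.Icc a b := Set.Icc_subset_Icc_right hc.2
  have hright : Set.Icc c b ⊆ Set.Icc a b := Set.Icc_subset_Icc_left hc.1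
  rw [← intervalIntegral.integral_add_adjacent_intervals (b := c)
    (intervalIntegrable_cexp_I_mul (fun s hs => hθ s (hleft hs)) hc.1)
    (intervalIntegrable_cexp_I_mul (fun s hs => hθ s (hright hs)) hc.2)]
  calc _ ≤ 3 / √l + 3 / √l := by
        refine (norm_add_le _ _).trans (add_le_add ?_ ?_)
        · exact norm_integral_cexp_I_mul_le_of_nonpos_deriv_right hc.1 hl0
            (fun s hs => hθ s (hleft hs)) (fun s hs => hθ' s (hleft hs)) (hθ''.mono hleft)
            (fun s hs => hl s (hleft hs)) hc0.le
        · exact norm_integral_cexp_I_mul_le_of_nonneg_deriv_left hc.2 hl0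
            (fun s hs => hθ s (hright hs)) (fun s hs => hθ' s (hright hs)) (hθ''.mono hright)
            (fun s hs => hl s (hright hs)) hc0.ge
    _ = 6 / √l := by ring

theorem norm_integral_cexp_I_mul_le_of_deriv2_le_neg (hab : a ≤ b) (hl0 : 0 < l)
    (hθ : ∀ s ∈ Set.Icc a b, HasDerivAt θ (θ' s) s)
    (hθ' : ∀ s ∈ Set.Icc a b, HasDerivAt θ' (θ'' s) s) (hθ'' : ContinuousOn θ'' (Set.Icc a b))
    (hl : ∀ s ∈ Set.Icc a b, θ'' s ≤ -l) :
    ‖∫ s in a..b, cexp (I * θ s)‖ ≤ 6 / √l := by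
  have hconj : ∫ s in a..b, cexp (I * θ s) =
      (starRingEnd ℂ) (∫ s in a..b, cexp (I * ((-θ s : ℝ) : ℂ))) := by
    rw [intervalIntegral.integral_of_le hab, intervalIntegral.integral_of_le hab, ← integral_conj]
    simp only [← Complex.exp_conj, map_mul, Complex.conj_I, Complex.conj_ofReal, ofReal_neg,
      map_neg, neg_mul_neg]
  rw [hconj, RCLike.norm_conj]
  exact norm_integral_cexp_I_mul_le_of_le_deriv2 hab hl0 (fun s hs => (hθ s hs).neg)
    (fun s hs => (hθ' s hs).neg) hθ''.neg fun s hs => le_neg_of_le_neg (hl s hs)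

end VanDerCorput

section NormAlongLines

variable {V : Type*} [NormedAddCommGroup V] [InnerProductSpace ℝ V] {a v ξ e : V} {s γ σ : ℝ}

/-- The second derivative of the norm at the point `a` in the direction `v`. -/
def normHess (a v : V) : ℝ := (‖a‖ ^ 2 * ‖v‖ ^ 2 - inner ℝ a v ^ 2) / ‖a‖ ^ 3

theorem normHess_nonneg (a v : V) : 0 ≤ normHess a v := by
  refine div_nonneg (sub_nonneg.2 ?_) (by positivity)
  rw [← mul_pow, sq_le_sq, abs_of_nonneg (by positivity : 0 ≤ ‖a‖ * ‖v‖)]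
  exact abs_real_inner_le_norm a v

theorem hasDerivAt_add_smul (a v : V) (s : ℝ) : HasDerivAt (fun s : ℝ => a + s • v) v s := by
  simpa using ((hasDerivAt_id s).smul_const v).const_add a

theorem hasDerivAt_norm_add_smul (h : a + s • v ≠ 0) :
    HasDerivAt (fun s : ℝ => ‖a + s • v‖) (inner ℝ (a + s • v) v / ‖a + s • v‖) s := by
  have hsqrt := (hasDerivAt_add_smul a v s).norm_sq.sqrt (pow_ne_zero 2 (norm_ne_zero_iff.2 h))
  simp only [Real.sqrt_sq (norm_nonneg _)] at hsqrt
  convert hsqrt using 1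
  rw [mul_div_mul_left _ _ two_ne_zero]

theorem hasDerivAt_inner_div_norm_add_smul (h : a + s • v ≠ 0) :
    HasDerivAt (fun s : ℝ => inner ℝ (a + s • v) v / ‖a + s • v‖) (normHess (a + s • v) v) s := by
  have hne := norm_ne_zero_iff.2 h
  have hinner : HasDerivAt (fun s : ℝ => inner ℝ (a + s • v) v) (‖v‖ ^ 2) s := by
    simpa using (hasDerivAt_add_smul a v s).inner ℝ (hasDerivAt_const s v)
  refine (hinner.div (hasDerivAt_norm_add_smul h) hne).congr_deriv ?_
  rw [normHess]
  field_simp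

theorem continuousOn_normHess (v : V) : ContinuousOn (fun a => normHess a v) {0}ᶜ := by
  unfold normHess
  exact ContinuousOn.div (by fun_prop) (by fun_prop) fun a ha => by simpa using ha

/-- The phase of the propagator, as a function of the frequency `ξ`: half the sum (`σ = 1`) or the
difference (`σ = -1`) of the distances from `γ ξ` to the two centres `-e` and `e`. -/
def twoCenterPhase (e : V) (γ σ : ℝ) (ξ : V) : ℝ := (‖γ • ξ + e‖ + σ * ‖γ • ξ - e‖) / 2

theorem continuous_twoCenterPhase (e : V) (γ σ : ℝ) : Continuous (twoCenterPhase e γ σ) := by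
  unfold twoCenterPhase
  fun_prop

theorem twoCenterPhase_neg (hσ : σ = 1 ∨ σ = -1) (e : V) (γ : ℝ) (ξ : V) :
    twoCenterPhase (-e) γ σ ξ = σ * twoCenterPhase e γ σ ξ := by
  simp only [twoCenterPhase, sub_neg_eq_add, ← sub_eq_add_neg]
  rcases hσ with rfl | rfl <;> ring

/-- The derivative at `ξ` of `twoCenterPhase e γ σ` in the direction `v`. -/
def twoCenterPhaseDeriv (e : V) (γ σ : ℝ) (v ξ : V) : ℝ :=
  (inner ℝ (γ • ξ + e) (γ • v) / ‖γ • ξ + e‖ + σ * (inner ℝ (γ • ξ - e) (γ • v) / ‖γ • ξ - e‖)) / 2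

/-- The second derivative at `ξ` of `twoCenterPhase e γ σ` in the direction `v`. -/
def twoCenterPhaseHess (e : V) (γ σ : ℝ) (v ξ : V) : ℝ :=
  (normHess (γ • ξ + e) (γ • v) + σ * normHess (γ • ξ - e) (γ • v)) / 2

theorem smul_add_smul_add (γ s : ℝ) (ξ v e : V) :
    γ • (ξ + s • v) + e = (γ • ξ + e) + s • γ • v := by
  rw [smul_add, smul_comm γ s, add_right_comm]

theorem smul_add_smul_sub (γ s : ℝ) (ξ v e : V) :
    γ • (ξ + s • v) - e = (γ • ξ - e) + s • γ • v := by
  simpa only [sub_eq_add_neg] using smul_add_smul_add γ s ξ v (-e)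

theorem hasDerivAt_twoCenterPhase (h₁ : γ • (ξ + s • v) + e ≠ 0)
    (h₂ : γ • (ξ + s • v) - e ≠ 0) :
    HasDerivAt (fun s : ℝ => twoCenterPhase e γ σ (ξ + s • v))
      (twoCenterPhaseDeriv e γ σ v (ξ + s • v)) s := by
  simp only [twoCenterPhase, twoCenterPhaseDeriv, smul_add_smul_add, smul_add_smul_sub] at h₁ h₂ ⊢
  exact ((hasDerivAt_norm_add_smul h₁).add
    ((hasDerivAt_norm_add_smul h₂).const_mul σ)).div_const 2

theorem hasDerivAt_twoCenterPhaseDeriv (h₁ : γ • (ξ + s • v) + e ≠ 0)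
    (h₂ : γ • (ξ + s • v) - e ≠ 0) :
    HasDerivAt (fun s : ℝ => twoCenterPhaseDeriv e γ σ v (ξ + s • v))
      (twoCenterPhaseHess e γ σ v (ξ + s • v)) s := by
  simp only [twoCenterPhaseDeriv, twoCenterPhaseHess, smul_add_smul_add,
    smul_add_smul_sub] at h₁ h₂ ⊢
  exact ((hasDerivAt_inner_div_norm_add_smul h₁).add
    ((hasDerivAt_inner_div_norm_add_smul h₂).const_mul σ)).div_const 2

theorem continuousOn_twoCenterPhaseHess (e : V) (γ σ : ℝ) (v : V) :
    ContinuousOn (twoCenterPhaseHess e γ σ v) {ξ | γ • ξ + e ≠ 0 ∧ γ • ξ - e ≠ 0} := by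
  have hhess := continuousOn_normHess (γ • v)
  exact ((hhess.comp (f := fun ξ => γ • ξ + e) (by fun_prop) fun ξ hξ => hξ.1).add
    ((hhess.comp (f := fun ξ => γ • ξ - e) (by fun_prop) fun ξ hξ => hξ.2).const_mul
      σ)).div_const 2

theorem le_twoCenterPhaseHess_or_le_neg {m : ℝ} (hσ : σ = 1 ∨ σ = -1)
    {U : Set V} (hm : ∀ η ∈ U,
      2 * m ≤ normHess (γ • η - e) (γ • v) - normHess (γ • η + e) (γ • v)) :
    (∀ η ∈ U, m ≤ twoCenterPhaseHess e γ σ v η) ∨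
      ∀ η ∈ U, twoCenterPhaseHess e γ σ v η ≤ -m := by
  rcases hσ with rfl | rfl
  · refine Or.inl fun η hη => ?_
    have := normHess_nonneg (γ • η + e) (γ • v)
    rw [twoCenterPhaseHess]
    linarith [hm η hη]
  · refine Or.inr fun η hη => ?_
    rw [twoCenterPhaseHess]
    linarith [hm η hη]

theorem smul_sub_ne_zero_of_normHess_lt (h : normHess (γ • ξ + e) (γ • v) <
    normHess (γ • ξ - e) (γ • v)) : γ • ξ - e ≠ 0 := fun h0 => by
  have hzero : normHess (0 : V) (γ • v) = 0 := by simp [normHess]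
  rw [h0, hzero] at h
  exact h.not_ge (normHess_nonneg _ _)

theorem planeWave_add_smul (φ : V → ℝ) (τ s : ℝ) (x ξ v : V) :
    planeWave φ τ x (ξ + s • v) =
      cexp (I *
        ((τ * φ (ξ + s • v) + s * (2 * π * inner ℝ v x) + 2 * π * inner ℝ ξ x : ℝ) : ℂ)) := by
  rw [planeWave, mul_comm I, inner_add_left, real_inner_smul_left]
  ring_nf

theorem norm_integral_planeWave_add_smul_le {τ m s₁ s₂ : ℝ} (hσ : σ = 1 ∨ σ = -1) (hτ : τ ≠ 0)
    (hm : 0 < m) (hs : s₁ ≤ s₂) (hne : ∀ s ∈ Set.Icc s₁ s₂, γ • (ξ + s • v) + e ≠ 0)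
    (hhess : ∀ s ∈ Set.Icc s₁ s₂, 2 * m ≤ normHess (γ • (ξ + s • v) - e) (γ • v) -
      normHess (γ • (ξ + s • v) + e) (γ • v)) (x : V) :
    ‖∫ s in s₁..s₂, planeWave (twoCenterPhase e γ σ) τ x (ξ + s • v)‖ ≤ 6 / √(|τ| * m) := by
  have hne' (s) (hs : s ∈ Set.Icc s₁ s₂) : γ • (ξ + s • v) - e ≠ 0 :=
    smul_sub_ne_zero_of_normHess_lt (sub_pos.1 ((by positivity : 0 < 2 * m).trans_le (hhess s hs)))
  have hd (s) (hs : s ∈ Set.Icc s₁ s₂) := (((hasDerivAt_twoCenterPhase (σ := σ) (hne s hs)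
    (hne' s hs)).const_mul τ).add ((hasDerivAt_id s).mul_const (2 * π * inner ℝ v x))).add_const
      (2 * π * inner ℝ ξ x)
  have hd' (s) (hs : s ∈ Set.Icc s₁ s₂) := ((hasDerivAt_twoCenterPhaseDeriv (σ := σ) (hne s hs)
    (hne' s hs)).const_mul τ).add_const (1 * (2 * π * inner ℝ v x))
  have hcont : ContinuousOn (fun s : ℝ => τ * twoCenterPhaseHess e γ σ v (ξ + s • v))
      (Set.Icc s₁ s₂) :=
    continuousOn_const.mul ((continuousOn_twoCenterPhaseHess e γ σ v).comp (by fun_prop)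
      fun s hs => ⟨hne s hs, hne' s hs⟩)
  have hτm : 0 < |τ| * m := mul_pos (abs_pos.2 hτ) hm
  simp only [planeWave_add_smul]
  have hdich := le_twoCenterPhaseHess_or_le_neg (U := (fun s : ℝ => ξ + s • v) '' Set.Icc s₁ s₂) hσ
    (Set.forall_mem_image.2 hhess)
  simp only [Set.forall_mem_image] at hdich
  have hsign : (∀ s ∈ Set.Icc s₁ s₂, |τ| * m ≤ τ * twoCenterPhaseHess e γ σ v (ξ + s • v)) ∨
      ∀ s ∈ Set.Icc s₁ s₂, τ * twoCenterPhaseHess e γ σ v (ξ + s • v) ≤ -(|τ| * m) := by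
    rcases lt_or_gt_of_ne hτ with h | h
    · rw [abs_of_neg h]
      exact hdich.symm.imp (fun H s hs => by nlinarith [H hs]) fun H s hs => by nlinarith [H hs]
    · rw [abs_of_pos h]
      exact hdich.imp (fun H s hs => by nlinarith [H hs]) fun H s hs => by nlinarith [H hs]
  rcases hsign with hpos | hneg
  · exact norm_integral_cexp_I_mul_le_of_le_deriv2 hs hτm hd hd' hcont hpos
  · exact norm_integral_cexp_I_mul_le_of_deriv2_le_neg hs hτm hd hd' hcont hneg

end NormAlongLines

theorem dispersiveDecay_of_ne_zero {V : Type*} [NormedAddCommGroup V] [InnerProductSpace ℝ V]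
    [MeasurableSpace V] {φ : V → ℝ} {ν : Measure V} {κ : ℝ≥0∞} {α : ℝ} (hκ : κ ≠ 0) (hα : 0 < α)
    (h : ∀ τ ≠ 0, ∀ x, ‖∫ ξ, planeWave φ τ x ξ ∂ν‖ₑ ≤ κ * ‖τ‖ₑ ^ (-α)) :
    DispersiveDecay φ ν κ α := fun τ x => by
  rcases eq_or_ne τ 0 with rfl | hτ
  · simp [ENNReal.zero_rpow_of_neg (neg_neg_of_pos hα), ENNReal.mul_top hκ]
  · exact h τ hτ x

section Averaging

variable {V : Type*} [NormedAddCommGroup V] [InnerProductSpace ℝ V] [FiniteDimensional ℝ V]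
  [MeasurableSpace V] [BorelSpace V]

theorem integral_intervalIntegral_add_smul {F : V → ℂ} (hF : Integrable F) (v : V) {L : ℝ}
    (hL : 0 ≤ L) : ∫ ξ, ∫ s in (0 : ℝ)..L, F (ξ + s • v) = L • ∫ ξ, F ξ := by
  have hshift : Measure.QuasiMeasurePreserving (fun z : V × ℝ => z.1 + z.2 • v)
      (volume.prod (volume.restrict (Set.Ioc 0 L))) volume :=
    QuasiMeasurePreserving.prod_of_left (by fun_prop) (.of_forall fun s =>
      (measurePreserving_add_right volume (s • v)).quasiMeasurePreserving)
  have hint : Integrable (Function.uncurry fun (ξ : V) (s : ℝ) => F (ξ + s • v))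
      (volume.prod (volume.restrict (Set.Ioc 0 L))) := by
    refine (integrable_prod_iff' (hF.1.comp_quasiMeasurePreserving hshift)).2
      ⟨.of_forall fun s => hF.comp_add_right (s • v), ?_⟩
    simp only [Function.comp_apply, integral_add_right_eq_self fun ξ => ‖F ξ‖]
    exact integrable_const _
  simp only [intervalIntegral.integral_of_le hL]
  rw [integral_integral_swap hint]
  simp [integral_add_right_eq_self F, hL]

theorem ofReal_mul_enorm_integral_le_setLIntegral {F : V → ℂ} (hF : Integrable F) {A L : ℝ}
    (hFA : ∀ ξ, F ξ ≠ 0 → ‖ξ‖ ≤ A) (hL : 0 ≤ L) {v : V} {B : V → ℝ≥0∞}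
    (hB : ∀ ξ, ‖∫ s in (0 : ℝ)..L, F (ξ + s • v)‖ₑ ≤ B ξ) :
    ENNReal.ofReal L * ‖∫ ξ, F ξ‖ₑ ≤ ∫⁻ ξ in Metric.closedBall 0 (A + L * ‖v‖), B ξ := by
  have hzero (ξ : V) (hξ : ξ ∉ Metric.closedBall (0 : V) (A + L * ‖v‖)) :
      ∫ s in (0 : ℝ)..L, F (ξ + s • v) = 0 := by
    rw [intervalIntegral.integral_of_le hL]
    refine setIntegral_eq_zero_of_forall_eq_zero fun s hs => ?_
    contrapose! hξ
    have hsv : ‖s • v‖ ≤ L * ‖v‖ := by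
      rw [norm_smul, Real.norm_of_nonneg hs.1.le]
      exact mul_le_mul_of_nonneg_right hs.2 (norm_nonneg v)
    have htri : ‖ξ‖ ≤ ‖ξ + s • v‖ + ‖s • v‖ := by simpa using norm_sub_le (ξ + s • v) (s • v)
    rw [mem_closedBall_zero_iff]
    linarith [hFA _ hξ]
  calc ENNReal.ofReal L * ‖∫ ξ, F ξ‖ₑ = ‖∫ ξ, ∫ s in (0 : ℝ)..L, F (ξ + s • v)‖ₑ := by
        rw [integral_intervalIntegral_add_smul hF v hL, enorm_smul, Real.enorm_eq_ofReal hL]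
    _ ≤ ∫⁻ ξ, ‖∫ s in (0 : ℝ)..L, F (ξ + s • v)‖ₑ := enorm_integral_le_lintegral_enorm _
    _ ≤ ∫⁻ ξ, (Metric.closedBall 0 (A + L * ‖v‖)).indicator B ξ := lintegral_mono fun ξ => by
        by_cases hξ : ξ ∈ Metric.closedBall (0 : V) (A + L * ‖v‖)
        · simpa only [Set.indicator_of_mem hξ] using hB ξ
        · simp [hzero ξ hξ]
    _ = ∫⁻ ξ in Metric.closedBall 0 (A + L * ‖v‖), B ξ :=
        lintegral_indicator Metric.isClosed_closedBall.measurableSet B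

end Averaging

section LineSections

variable {V : Type*} [NormedAddCommGroup V] [InnerProductSpace ℝ V] {S : Set V} {ξ v e : V}
  {γ σ τ m L : ℝ}

theorem eq_empty_or_exists_Icc_of_isClosed_of_convex (hS : IsClosed S) (hconv : Convex ℝ S)
    (ξ v : V) (L : ℝ) : Set.Icc 0 L ∩ {s : ℝ | ξ + s • v ∈ S} = ∅ ∨
      ∃ s₁ s₂, s₁ ≤ s₂ ∧ Set.Icc 0 L ∩ {s : ℝ | ξ + s • v ∈ S} = Set.Icc s₁ s₂ := by
  have hcompact : IsCompact (Set.Icc 0 L ∩ {s : ℝ | ξ + s • v ∈ S}) :=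
    isCompact_Icc.inter_right (hS.preimage (by fun_prop))
  have hline : Convex ℝ {s : ℝ | ξ + s • v ∈ S} := by
    have hpre := hconv.affine_preimage (AffineMap.lineMap ξ (ξ + v) : ℝ →ᵃ[ℝ] V)
    simpa [Set.preimage, AffineMap.lineMap_apply, add_comm] using hpre
  refine (Set.eq_empty_or_nonempty _).imp_right fun hne => ?_
  have hIcc := eq_Icc_of_connected_compact
    ⟨hne, ((convex_Icc 0 L).inter hline).isPreconnected⟩ hcompact
  exact ⟨_, _, Set.nonempty_Icc.1 (hIcc ▸ hne), hIcc⟩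

theorem norm_integral_indicator_planeWave_add_smul_le (hS : IsClosed S) (hconv : Convex ℝ S)
    (hσ : σ = 1 ∨ σ = -1) (hτ : τ ≠ 0) (hm : 0 < m) (hL : 0 ≤ L)
    (hne : ∀ s : ℝ, ξ + s • v ∈ S → γ • (ξ + s • v) + e ≠ 0)
    (hhess : ∀ s : ℝ, ξ + s • v ∈ S → 2 * m ≤ normHess (γ • (ξ + s • v) - e) (γ • v) -
      normHess (γ • (ξ + s • v) + e) (γ • v)) (x : V) :
    ‖∫ s in (0 : ℝ)..L, S.indicator (planeWave (twoCenterPhase e γ σ) τ x) (ξ + s • v)‖ ≤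
      6 / √(|τ| * m) := by
  have hmeas : MeasurableSet {s : ℝ | ξ + s • v ∈ S} :=
    (hS.preimage (by fun_prop : Continuous fun s : ℝ => ξ + s • v)).measurableSet
  have hind (s : ℝ) : S.indicator (planeWave (twoCenterPhase e γ σ) τ x) (ξ + s • v) =
      {s : ℝ | ξ + s • v ∈ S}.indicator
        (fun s => planeWave (twoCenterPhase e γ σ) τ x (ξ + s • v)) s := rfl
  rw [intervalIntegral.integral_of_le hL, ← integral_Icc_eq_integral_Ioc]
  simp only [hind]
  rw [setIntegral_indicator hmeas]
  rcases eq_empty_or_exists_Icc_of_isClosed_of_convex hS hconv ξ v L with h | ⟨s₁, s₂, hs, h⟩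
  · rw [h, setIntegral_empty, norm_zero]
    positivity
  · have hmem (s) (hs : s ∈ Set.Icc s₁ s₂) : ξ + s • v ∈ S := (h.symm ▸ hs).2
    rw [h, integral_Icc_eq_integral_Ioc, ← intervalIntegral.integral_of_le hs]
    exact norm_integral_planeWave_add_smul_le hσ hτ hm hs (fun s hs => hne s (hmem s hs))
      (fun s hs => hhess s (hmem s hs)) x

end LineSections

section ConvexPieces

variable {V : Type*} [NormedAddCommGroup V] [InnerProductSpace ℝ V] [FiniteDimensional ℝ V]
  [MeasurableSpace V] [BorelSpace V]

theorem enorm_setIntegral_planeWave_le {S : Set V} {v e : V} {γ σ τ c A L : ℝ} {w : V → ℝ}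
    (hS : IsCompact S) (hconv : Convex ℝ S) (hA : ∀ ξ ∈ S, ‖ξ‖ ≤ A) (hL : 0 < L) (hc : 0 < c)
    (hσ : σ = 1 ∨ σ = -1) (hτ : τ ≠ 0) (hw : ∀ ξ, 0 ≤ w ξ)
    (hwv : ∀ ξ (s : ℝ), w (ξ + s • v) = w ξ) (hne : ∀ ξ ∈ S, γ • ξ + e ≠ 0)
    (hhess : ∀ ξ ∈ S, 2 * (c * w ξ ^ 2) ≤
      normHess (γ • ξ - e) (γ • v) - normHess (γ • ξ + e) (γ • v)) (x : V) :
    ENNReal.ofReal L * ‖∫ ξ in S, planeWave (twoCenterPhase e γ σ) τ x ξ‖ₑ ≤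
      ENNReal.ofReal (6 / √(|τ| * c)) *
        ∫⁻ ξ in Metric.closedBall 0 (A + L * ‖v‖), (ENNReal.ofReal (w ξ))⁻¹ := by
  have hτc : 0 < |τ| * c := mul_pos (abs_pos.2 hτ) hc
  have hcont : Continuous (planeWave (twoCenterPhase e γ σ) τ x) :=
    (continuous_planeWave (continuous_twoCenterPhase e γ σ)).comp
      (by fun_prop : Continuous fun ξ => (τ, x, ξ))
  rw [← integral_indicator hS.measurableSet, ← lintegral_const_mul' _ _ ENNReal.ofReal_ne_top]
  refine ofReal_mul_enorm_integral_le_setLIntegral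
    ((integrable_indicator_iff hS.measurableSet).2
      (hcont.continuousOn.integrableOn_compact hS))
    (fun ξ hξ => hA ξ (Set.mem_of_indicator_ne_zero hξ)) hL.le fun ξ => ?_
  rcases (hw ξ).eq_or_lt with hzero | hpos
  · rw [← hzero, ENNReal.ofReal_zero, ENNReal.inv_zero, ENNReal.mul_top]
    · exact le_top
    · exact ENNReal.ofReal_ne_zero_iff.2 (by positivity)
  · have hsqrt : √(|τ| * c) * w ξ = √(|τ| * (c * w ξ ^ 2)) := by
      rw [← mul_assoc, Real.sqrt_mul hτc.le, Real.sqrt_sq hpos.le]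
    rw [← ENNReal.ofReal_inv_of_pos hpos, ← ENNReal.ofReal_mul (by positivity),
      ← div_eq_mul_inv, div_div, hsqrt, ← ofReal_norm]
    exact ENNReal.ofReal_le_ofReal (norm_integral_indicator_planeWave_add_smul_le hS.isClosed hconv
      hσ hτ (by positivity) hL.le (fun s hs => hne _ hs)
      (fun s hs => by simpa only [hwv] using hhess _ hs) x)

theorem dispersiveDecay_twoCenterPhase {S : Set V} {v e : V} {γ σ c A L : ℝ} {w : V → ℝ}
    {κ : ℝ≥0∞} (hS : IsCompact S) (hconv : Convex ℝ S) (hA : ∀ ξ ∈ S, ‖ξ‖ ≤ A) (hL : 0 < L)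
    (hc : 0 < c) (hσ : σ = 1 ∨ σ = -1) (hw : ∀ ξ, 0 ≤ w ξ)
    (hwv : ∀ ξ (s : ℝ), w (ξ + s • v) = w ξ) (hne : ∀ ξ ∈ S, γ • ξ + e ≠ 0)
    (hhess : ∀ ξ ∈ S, 2 * (c * w ξ ^ 2) ≤
      normHess (γ • ξ - e) (γ • v) - normHess (γ • ξ + e) (γ • v))
    (hκ : κ ≠ 0) (hwκ : ENNReal.ofReal (6 / (√c * L)) *
      ∫⁻ ξ in Metric.closedBall 0 (A + L * ‖v‖), (ENNReal.ofReal (w ξ))⁻¹ ≤ κ) :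
    DispersiveDecay (twoCenterPhase e γ σ) (volume.restrict S) κ (1 / 2) := by
  refine dispersiveDecay_of_ne_zero hκ one_half_pos fun τ hτ x => ?_
  have hL0 : ENNReal.ofReal L ≠ 0 := ENNReal.ofReal_ne_zero_iff.2 hL
  have hconst : ENNReal.ofReal (6 / √(|τ| * c)) =
      ENNReal.ofReal L * (ENNReal.ofReal (6 / (√c * L)) * ‖τ‖ₑ ^ (-(1 / 2) : ℝ)) := by
    rw [Real.enorm_eq_ofReal_abs, ENNReal.ofReal_rpow_of_pos (abs_pos.2 hτ),
      ← ENNReal.ofReal_mul (by positivity), ← ENNReal.ofReal_mul hL.le,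
      Real.rpow_neg (abs_nonneg τ), ← Real.sqrt_eq_rpow, Real.sqrt_mul (abs_nonneg τ)]
    congr 1
    field_simp
  have hmain := enorm_setIntegral_planeWave_le hS hconv hA hL hc hσ hτ hw hwv hne hhess x
  rw [hconst, mul_assoc, ENNReal.mul_le_mul_iff_right hL0 ENNReal.ofReal_ne_top] at hmain
  refine hmain.trans ?_
  rw [mul_right_comm]
  gcongr

end ConvexPieces

section Curvature

variable {V : Type*} [NormedAddCommGroup V] [InnerProductSpace ℝ V] {a b v e u ξ : V} {γ : ℝ}

theorem sub_div_le_normHess_sub (ha : a ≠ 0) (hab : ‖a‖ ≤ ‖b‖) :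
    ((‖a‖ ^ 2 * ‖v‖ ^ 2 - inner ℝ a v ^ 2) - (‖b‖ ^ 2 * ‖v‖ ^ 2 - inner ℝ b v ^ 2)) / ‖b‖ ^ 3 ≤
      normHess a v - normHess b v := by
  have ha' : 0 < ‖a‖ ^ 3 := by positivity
  have hnum : 0 ≤ ‖a‖ ^ 2 * ‖v‖ ^ 2 - inner ℝ a v ^ 2 := by
    have hnonneg := mul_nonneg (normHess_nonneg a v) ha'.le
    rwa [normHess, div_mul_cancel₀ _ ha'.ne'] at hnonneg
  rw [sub_div, normHess, normHess]
  gcongr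

theorem sq_sub_sq_div_pow_le {s t : ℝ} (hs : 0 < s) (hst : s ≤ t) :
    (t ^ 2 - s ^ 2) / t ^ 5 ≤ 1 / s ^ 3 - 1 / t ^ 3 := by
  have ht := hs.trans_le hst
  have hcube : s ^ 3 * (t ^ 2 - s ^ 2) ≤ t ^ 2 * (t ^ 3 - s ^ 3) := by
    have hfactor : s ^ 3 * (t + s) ≤ t ^ 2 * (t ^ 2 + t * s + s ^ 2) :=
      calc s ^ 3 * (t + s) = s ^ 2 * (t * s + s ^ 2) := by ring
        _ ≤ t ^ 2 * (t ^ 2 + t * s + s ^ 2) := by gcongr; nlinarith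
    linear_combination (t - s) * hfactor
  rw [div_sub_div _ _ (by positivity) (by positivity), div_le_div_iff₀ (by positivity)
    (by positivity)]
  linear_combination t ^ 3 * hcube

theorem norm_smul_add_sq (he : ‖e‖ = 1) (γ : ℝ) (ξ : V) :
    ‖γ • ξ + e‖ ^ 2 = γ ^ 2 * ‖ξ‖ ^ 2 + 2 * γ * inner ℝ e ξ + 1 := by
  rw [norm_add_sq_real, norm_smul, real_inner_smul_left, real_inner_comm, he, mul_pow,
    Real.norm_eq_abs, sq_abs]
  ring

theorem norm_smul_sub_sq (he : ‖e‖ = 1) (γ : ℝ) (ξ : V) :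
    ‖γ • ξ - e‖ ^ 2 = γ ^ 2 * ‖ξ‖ ^ 2 - 2 * γ * inner ℝ e ξ + 1 := by
  have := norm_smul_add_sq (e := -e) (by rwa [norm_neg]) γ ξ
  rw [sub_eq_add_neg, this, inner_neg_left]
  ring

theorem norm_smul_sub_le_norm_smul_add (he : ‖e‖ = 1) (hγ : 0 ≤ γ) (hz : 0 ≤ inner ℝ e ξ) :
    ‖γ • ξ - e‖ ≤ ‖γ • ξ + e‖ := by
  rw [← sq_le_sq₀ (norm_nonneg _) (norm_nonneg _), norm_smul_add_sq he, norm_smul_sub_sq he]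
  linarith [mul_nonneg hγ hz]

theorem norm_sub_inner_smul_sq (he : ‖e‖ = 1) (ξ : V) :
    ‖ξ - inner ℝ e ξ • e‖ ^ 2 = ‖ξ‖ ^ 2 - inner ℝ e ξ ^ 2 := by
  rw [norm_sub_sq_real, real_inner_smul_right, norm_smul, he, real_inner_comm, mul_one,
    Real.norm_eq_abs, sq_abs]
  ring

theorem normHess_smul_add_self (he : ‖e‖ = 1) (γ : ℝ) (ξ : V) :
    normHess (γ • ξ + e) (γ • e) =
      γ ^ 4 * ‖ξ - inner ℝ e ξ • e‖ ^ 2 / ‖γ • ξ + e‖ ^ 3 := by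
  rw [normHess]
  congr 1
  rw [norm_sub_inner_smul_sq he, norm_smul_add_sq he, norm_smul, he, inner_add_left,
    real_inner_smul_left, real_inner_smul_right, real_inner_smul_right, real_inner_self_eq_norm_sq,
    he, real_inner_comm, mul_one, Real.norm_eq_abs, sq_abs]
  ring

theorem normHess_smul_sub_self (he : ‖e‖ = 1) (γ : ℝ) (ξ : V) :
    normHess (γ • ξ - e) (γ • e) =
      γ ^ 4 * ‖ξ - inner ℝ e ξ • e‖ ^ 2 / ‖γ • ξ - e‖ ^ 3 := by
  have := normHess_smul_add_self (e := -e) (by rwa [norm_neg]) γ ξ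
  rw [inner_neg_left, neg_smul_neg, ← sub_eq_add_neg] at this
  rw [← this, normHess, normHess, smul_neg, norm_neg, inner_neg_right, neg_sq]

theorem le_normHess_sub_self (he : ‖e‖ = 1) (hγ : 0 ≤ γ) (hz : 0 ≤ inner ℝ e ξ) :
    4 * γ ^ 5 * ‖ξ - inner ℝ e ξ • e‖ ^ 2 * (inner ℝ e ξ / ‖γ • ξ + e‖ ^ 5) ≤
      normHess (γ • ξ - e) (γ • e) - normHess (γ • ξ + e) (γ • e) := by
  rw [normHess_smul_add_self he, normHess_smul_sub_self he]
  rcases (norm_nonneg (γ • ξ - e)).eq_or_lt with hzero | hpos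
  · have hγξ : γ • ξ = e := sub_eq_zero.1 (norm_eq_zero.1 hzero.symm)
    have hrej : γ ^ 2 * ‖ξ - inner ℝ e ξ • e‖ ^ 2 = 0 := by
      have hinner : γ * inner ℝ e ξ = 1 := by
        rw [← real_inner_smul_right, hγξ, real_inner_self_eq_norm_sq, he, one_pow]
      have hnorm : γ * ‖ξ‖ = 1 := by
        rw [← abs_of_nonneg hγ, ← Real.norm_eq_abs, ← norm_smul, hγξ, he]
      rw [norm_sub_inner_smul_sq he]
      linear_combination (γ * ‖ξ‖ + 1) * hnorm - (γ * inner ℝ e ξ + 1) * hinner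
    refine le_of_eq ?_
    linear_combination (4 * γ ^ 3 * (inner ℝ e ξ / ‖γ • ξ + e‖ ^ 5) -
      γ ^ 2 / ‖γ • ξ - e‖ ^ 3 + γ ^ 2 / ‖γ • ξ + e‖ ^ 3) * hrej
  · have hdiff : ‖γ • ξ + e‖ ^ 2 - ‖γ • ξ - e‖ ^ 2 = 4 * γ * inner ℝ e ξ := by
      rw [norm_smul_add_sq he, norm_smul_sub_sq he]
      ring
    have hmain := sq_sub_sq_div_pow_le hpos (norm_smul_sub_le_norm_smul_add he hγ hz)
    rw [hdiff] at hmain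
    linear_combination (γ ^ 4 * ‖ξ - inner ℝ e ξ • e‖ ^ 2) * hmain

theorem le_normHess_sub_add (he : ‖e‖ = 1) (hu : ‖u‖ = 1) (hue : inner ℝ u e = (0 : ℝ))
    (hγ : 0 < γ) (hz : 0 ≤ inner ℝ e ξ) (hzx : 2 * inner ℝ e ξ ≤ inner ℝ u ξ)
    (hx : 0 < inner ℝ u ξ) :
    2 * γ ^ 3 * (inner ℝ u ξ / ‖γ • ξ + e‖ ^ 3) ≤
      normHess (γ • ξ - e) (γ • (u + e)) - normHess (γ • ξ + e) (γ • (u + e)) := by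
  have hue' : inner ℝ e u = (0 : ℝ) := by rw [real_inner_comm, hue]
  have hne : γ • ξ - e ≠ 0 := fun h => by
    have := congrArg (inner ℝ u) h
    rw [inner_sub_right, hue, real_inner_smul_right, inner_zero_right, sub_zero] at this
    exact (mul_pos hγ hx).ne' this
  have hv : ‖γ • (u + e)‖ ^ 2 = 2 * γ ^ 2 := by
    rw [norm_smul, mul_pow, norm_add_sq_real, hu, he, hue, Real.norm_eq_abs, sq_abs]
    ring
  have hadd : inner ℝ (γ • ξ + e) (γ • (u + e)) = γ * (γ * (inner ℝ u ξ + inner ℝ e ξ) + 1) := by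
    simp only [inner_add_left, inner_add_right, real_inner_smul_left, real_inner_smul_right,
      real_inner_self_eq_norm_sq, he, hue', real_inner_comm ξ]
    ring
  have hsub : inner ℝ (γ • ξ - e) (γ • (u + e)) = γ * (γ * (inner ℝ u ξ + inner ℝ e ξ) - 1) := by
    simp only [inner_sub_left, inner_add_right, real_inner_smul_left, real_inner_smul_right,
      real_inner_self_eq_norm_sq, he, hue', real_inner_comm ξ]
    ring
  refine le_trans ?_ (sub_div_le_normHess_sub hne (norm_smul_sub_le_norm_smul_add he hγ.le hz))
  rw [hv, hadd, hsub, norm_smul_add_sq he, norm_smul_sub_sq he, ← mul_div_assoc]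
  gcongr
  linear_combination (2 * γ ^ 3) * hzx

end Curvature

section Pieces

variable {V : Type*} [NormedAddCommGroup V] [InnerProductSpace ℝ V] {e u ξ : V} {γ r R : ℝ}

/-- The frequencies of height between `r` and `2 * R` along `e` that are not far from the axis
`ℝ e`; on this set the phase is curved in the direction `e`. -/
def axialPiece (e : V) (r R : ℝ) : Set V :=
  {ξ | r ≤ inner ℝ e ξ ∧ inner ℝ e ξ ≤ 2 * R ∧ ‖ξ - inner ℝ e ξ • e‖ ≤ 3 * inner ℝ e ξ}

/-- The frequencies of height at least `r` along `e` whose dominant component, at most `2 * R`, is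
along `u`; on this set the phase is curved in the direction `u + e`. -/
def slantedPiece (u e : V) (r R : ℝ) : Set V :=
  {ξ | r ≤ inner ℝ e ξ ∧ 2 * inner ℝ e ξ ≤ inner ℝ u ξ ∧ inner ℝ u ξ ≤ 2 * R ∧
    ‖ξ - inner ℝ u ξ • u - inner ℝ e ξ • e‖ ≤ inner ℝ u ξ}

theorem convex_axialPiece (e : V) (r R : ℝ) : Convex ℝ (axialPiece e r R) := by
  intro ξ ⟨h₁, h₂, h₃⟩ η ⟨h₁', h₂', h₃'⟩ s t hs ht hst
  have hrej : s • ξ + t • η - inner ℝ e (s • ξ + t • η) • e =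
      s • (ξ - inner ℝ e ξ • e) + t • (η - inner ℝ e η • e) := by
    simp only [inner_add_right, real_inner_smul_right]
    module
  have hnorm := convexOn_univ_norm.2 (Set.mem_univ (ξ - inner ℝ e ξ • e))
    (Set.mem_univ (η - inner ℝ e η • e)) hs ht hst
  rw [smul_eq_mul, smul_eq_mul, ← hrej] at hnorm
  refine ⟨?_, ?_, hnorm.trans ?_⟩ <;>
    simp only [inner_add_right, real_inner_smul_right]
  · linear_combination s * h₁ + t * h₁' - r * hst
  · linear_combination s * h₂ + t * h₂' + 2 * R * hst
  · linear_combination s * h₃ + t * h₃'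

theorem convex_slantedPiece (u e : V) (r R : ℝ) : Convex ℝ (slantedPiece u e r R) := by
  intro ξ ⟨h₁, h₂, h₃, h₄⟩ η ⟨h₁', h₂', h₃', h₄'⟩ s t hs ht hst
  have hrej : s • ξ + t • η - inner ℝ u (s • ξ + t • η) • u - inner ℝ e (s • ξ + t • η) • e =
      s • (ξ - inner ℝ u ξ • u - inner ℝ e ξ • e) +
        t • (η - inner ℝ u η • u - inner ℝ e η • e) := by
    simp only [inner_add_right, real_inner_smul_right]
    module
  have hnorm := convexOn_univ_norm.2 (Set.mem_univ (ξ - inner ℝ u ξ • u - inner ℝ e ξ • e))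
    (Set.mem_univ (η - inner ℝ u η • u - inner ℝ e η • e)) hs ht hst
  rw [smul_eq_mul, smul_eq_mul, ← hrej] at hnorm
  refine ⟨?_, ?_, ?_, hnorm.trans ?_⟩ <;>
    simp only [inner_add_right, real_inner_smul_right]
  · linear_combination s * h₁ + t * h₁' - r * hst
  · linear_combination s * h₂ + t * h₂'
  · linear_combination s * h₃ + t * h₃' + 2 * R * hst
  · linear_combination s * h₄ + t * h₄'

theorem isClosed_axialPiece (e : V) (r R : ℝ) : IsClosed (axialPiece e r R) := by
  unfold axialPiece
  exact (isClosed_le (by fun_prop) (by fun_prop)).and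
    ((isClosed_le (by fun_prop) (by fun_prop)).and (isClosed_le (by fun_prop) (by fun_prop)))

theorem isClosed_slantedPiece (u e : V) (r R : ℝ) : IsClosed (slantedPiece u e r R) := by
  unfold slantedPiece
  exact (isClosed_le (by fun_prop) (by fun_prop)).and ((isClosed_le (by fun_prop) (by fun_prop)).and
    ((isClosed_le (by fun_prop) (by fun_prop)).and (isClosed_le (by fun_prop) (by fun_prop))))

theorem norm_le_of_mem_axialPiece (he : ‖e‖ = 1) (hr : 0 ≤ r) (hξ : ξ ∈ axialPiece e r R) :
    ‖ξ‖ ≤ 4 * inner ℝ e ξ := by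
  have htri := norm_sub_norm_le ξ (inner ℝ e ξ • e)
  rw [norm_smul, he, Real.norm_of_nonneg (hr.trans hξ.1)] at htri
  linarith [hξ.2.2]

theorem norm_le_of_mem_slantedPiece (he : ‖e‖ = 1) (hu : ‖u‖ = 1) (hr : 0 ≤ r)
    (hξ : ξ ∈ slantedPiece u e r R) : ‖ξ‖ ≤ 4 * inner ℝ u ξ := by
  obtain ⟨hz, hzx, -, hk⟩ := hξ
  have hx : 0 ≤ inner ℝ u ξ := by linarith
  have htri := (norm_sub_norm_le ξ (inner ℝ u ξ • u)).trans
    (sub_le_iff_le_add.1 (norm_sub_norm_le (ξ - inner ℝ u ξ • u) (inner ℝ e ξ • e)))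
  rw [norm_smul, norm_smul, he, hu, Real.norm_of_nonneg (hr.trans hz), Real.norm_of_nonneg hx]
    at htri
  linarith

theorem div_le_div_pow_of_le {t P : ℝ} (hγ : 0 ≤ γ) (hr1 : r ≤ 1) (hR : 1 ≤ R) (hrt : r ≤ t)
    (htR : t ≤ 2 * R) (hP : 0 < P) (hPt : P ≤ 1 + 4 * γ * t) (hr : 0 < r) (n : ℕ) :
    r / ((1 + 8 * γ) ^ (n + 1) * R ^ n) ≤ t / P ^ (n + 1) := by
  obtain ⟨ρ, hρ, hρR, htρ, hrρ⟩ : ∃ ρ, 1 ≤ ρ ∧ ρ ≤ R ∧ t ≤ 2 * ρ ∧ r * ρ ≤ t := by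
    refine ⟨max 1 (t / 2), le_max_left _ _, max_le hR (by linarith), ?_, ?_⟩
    · linarith [le_max_right 1 (t / 2)]
    · rw [mul_max_of_nonneg _ _ hr.le]
      exact max_le (by linarith) (by nlinarith)
  have hPρ : P ≤ (1 + 8 * γ) * ρ := by nlinarith
  calc r / ((1 + 8 * γ) ^ (n + 1) * R ^ n) ≤ r / ((1 + 8 * γ) ^ (n + 1) * ρ ^ n) := by gcongr
    _ = r * ρ / ((1 + 8 * γ) * ρ) ^ (n + 1) := by rw [mul_pow, pow_succ ρ]; field_simp
    _ ≤ t / P ^ (n + 1) := by have := hr.le.trans hrt; gcongr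

theorem norm_smul_add_le {t : ℝ} (he : ‖e‖ = 1) (hγ : 0 ≤ γ) (hξ : ‖ξ‖ ≤ 4 * t) :
    ‖γ • ξ + e‖ ≤ 1 + 4 * γ * t := by
  refine (norm_add_le _ _).trans ?_
  rw [norm_smul, he, Real.norm_of_nonneg hγ]
  nlinarith

theorem smul_add_ne_zero (he : ‖e‖ = 1) (hγ : 0 ≤ γ) (hz : 0 ≤ inner ℝ e ξ) : γ • ξ + e ≠ 0 := by
  rw [← norm_ne_zero_iff, ← sq_eq_zero_iff.ne, norm_smul_add_sq he]
  positivity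

theorem le_normHess_sub_of_mem_axialPiece (he : ‖e‖ = 1) (hγ : 0 ≤ γ) (hr : 0 < r) (hr1 : r ≤ 1)
    (hR : 1 ≤ R) (hξ : ξ ∈ axialPiece e r R) :
    2 * (2 * γ ^ 5 / (1 + 8 * γ) ^ 5 * r / R ^ 4 * ‖ξ - inner ℝ e ξ • e‖ ^ 2) ≤
      normHess (γ • ξ - e) (γ • e) - normHess (γ • ξ + e) (γ • e) := by
  have hz := hr.le.trans hξ.1
  have hdiv := div_le_div_pow_of_le hγ hr1 hR hξ.1 hξ.2.1
    (norm_pos_iff.2 (smul_add_ne_zero he hγ hz))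
    (norm_smul_add_le he hγ (norm_le_of_mem_axialPiece he hr.le hξ)) hr 4
  calc 2 * (2 * γ ^ 5 / (1 + 8 * γ) ^ 5 * r / R ^ 4 * ‖ξ - inner ℝ e ξ • e‖ ^ 2) =
        4 * γ ^ 5 * ‖ξ - inner ℝ e ξ • e‖ ^ 2 * (r / ((1 + 8 * γ) ^ (4 + 1) * R ^ 4)) := by
          field_simp
          ring
    _ ≤ 4 * γ ^ 5 * ‖ξ - inner ℝ e ξ • e‖ ^ 2 * (inner ℝ e ξ / ‖γ • ξ + e‖ ^ 5) := by gcongr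
    _ ≤ _ := le_normHess_sub_self he hγ hz

theorem le_normHess_sub_of_mem_slantedPiece (he : ‖e‖ = 1) (hu : ‖u‖ = 1)
    (hue : inner ℝ u e = (0 : ℝ)) (hγ : 0 < γ) (hr : 0 < r) (hr1 : r ≤ 1) (hR : 1 ≤ R)
    (hξ : ξ ∈ slantedPiece u e r R) :
    2 * (γ ^ 3 / (1 + 8 * γ) ^ 3 * r / R ^ 2) ≤
      normHess (γ • ξ - e) (γ • (u + e)) - normHess (γ • ξ + e) (γ • (u + e)) := by
  have hz := hr.le.trans hξ.1
  have hrx : r ≤ inner ℝ u ξ := by linarith [hξ.1, hξ.2.1]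
  have hdiv := div_le_div_pow_of_le hγ.le hr1 hR hrx hξ.2.2.1
    (norm_pos_iff.2 (smul_add_ne_zero he hγ.le hz))
    (norm_smul_add_le he hγ.le (norm_le_of_mem_slantedPiece he hu hr.le hξ)) hr 2
  calc 2 * (γ ^ 3 / (1 + 8 * γ) ^ 3 * r / R ^ 2) =
        2 * γ ^ 3 * (r / ((1 + 8 * γ) ^ (2 + 1) * R ^ 2)) := by field_simp
    _ ≤ 2 * γ ^ 3 * (inner ℝ u ξ / ‖γ • ξ + e‖ ^ 3) := by gcongr
    _ ≤ _ := le_normHess_sub_add he hu hue hγ hz hξ.2.1 (hr.trans_le hrx)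

end Pieces

section Covering

variable {r R γ σ : ℝ} {ξ : E3}

theorem lintegral_fin_nat_prod_eq_prod {n : ℕ} {E : Fin n → Type*} [∀ i, MeasurableSpace (E i)]
    {μ : (i : Fin n) → Measure (E i)} [∀ i, SigmaFinite (μ i)] {f : (i : Fin n) → E i → ℝ≥0∞}
    (hf : ∀ i, Measurable (f i)) :
    ∫⁻ x, ∏ i, f i (x i) ∂Measure.pi μ = ∏ i, ∫⁻ x, f i x ∂μ i := by
  induction n with
  | zero => simp
  | succ n ih =>
    have htail : Measurable fun x : (i : Fin n) → E i.succ => ∏ i, f i.succ (x i) :=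
      Finset.measurable_prod _ fun i _ => (hf i.succ).comp (measurable_pi_apply i)
    simp only [Fin.prod_univ_succ]
    rw [← ih fun i => hf i.succ, ← lintegral_prod_mul (hf 0).aemeasurable htail.aemeasurable]
    exact (measurePreserving_piFinSuccAbove μ 0).lintegral_comp
      (((hf 0).comp measurable_fst).mul (htail.comp measurable_snd))

theorem measureReal_ball_pos {X : Type*} [PseudoMetricSpace X] [ProperSpace X] [MeasurableSpace X]
    (μ : Measure X) [μ.IsOpenPosMeasure] [IsFiniteMeasureOnCompacts μ] (x : X) {ρ : ℝ}
    (hρ : 0 < ρ) : 0 < μ.real (Metric.ball x ρ) :=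
  ENNReal.toReal_pos (Metric.measure_ball_pos μ x hρ).ne' measure_ball_lt_top.ne

theorem inv_ofReal_xih_le (ξ : E3) :
    (ENNReal.ofReal (xih ξ))⁻¹ ≤ ‖ξ 0‖ₑ ^ (-(1 / 2) : ℝ) * ‖ξ 1‖ₑ ^ (-(1 / 2) : ℝ) := by
  have hreal : |ξ 0| ^ (1 / 2 : ℝ) * |ξ 1| ^ (1 / 2 : ℝ) ≤ xih ξ := by
    rw [← Real.mul_rpow (abs_nonneg _) (abs_nonneg _), ← Real.sqrt_eq_rpow, xih, ← abs_mul]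
    refine Real.sqrt_le_sqrt (abs_le_of_sq_le_sq ?_ (by positivity))
    linear_combination sq_nonneg (ξ 0 ^ 2) + sq_nonneg (ξ 1 ^ 2) + sq_nonneg (ξ 0 * ξ 1)
  have henorm : ‖ξ 0‖ₑ ^ (1 / 2 : ℝ) * ‖ξ 1‖ₑ ^ (1 / 2 : ℝ) ≤ ENNReal.ofReal (xih ξ) := by
    rw [Real.enorm_eq_ofReal_abs, Real.enorm_eq_ofReal_abs,
      ENNReal.ofReal_rpow_of_nonneg (abs_nonneg _) (by norm_num),
      ENNReal.ofReal_rpow_of_nonneg (abs_nonneg _) (by norm_num),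
      ← ENNReal.ofReal_mul (by positivity)]
    exact ENNReal.ofReal_le_ofReal hreal
  have hfin : ∀ i, ‖ξ i‖ₑ ^ (1 / 2 : ℝ) ≠ ⊤ := fun i =>
    ENNReal.rpow_ne_top_of_nonneg (by norm_num) enorm_ne_top
  rw [ENNReal.rpow_neg, ENNReal.rpow_neg, ← ENNReal.mul_inv (Or.inr (hfin 1)) (Or.inl (hfin 0))]
  exact ENNReal.inv_le_inv.2 henorm

theorem setLIntegral_inv_xih_le {A : ℝ} (hA : 0 ≤ A) :
    ∫⁻ ξ in Metric.closedBall (0 : E3) A, (ENNReal.ofReal (xih ξ))⁻¹ ≤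
      ENNReal.ofReal (32 * A ^ 2) := by
  let α : Fin 3 → ℝ := ![1 / 2, 1 / 2, 0]
  have hα : ∀ i, α i < 1 := by
    intro i
    fin_cases i <;> norm_num [α]
  let I : Set ℝ := {s | ‖0 - s‖ₑ ≤ ENNReal.ofReal A}
  have hI : MeasurableSet I := measurableSet_le (by fun_prop) measurable_const
  let F : Fin 3 → ℝ → ℝ≥0∞ := fun i => I.indicator fun s => ‖0 - s‖ₑ ^ (-α i)
  have hF : ∀ i, Measurable (F i) := fun i => Measurable.indicator (by fun_prop) hI
  have hpointwise : ∀ ξ ∈ Metric.closedBall (0 : E3) A,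
      (ENNReal.ofReal (xih ξ))⁻¹ ≤ ∏ i, F i (ξ i) := by
    intro ξ hξ
    have hmem : ∀ i, ξ i ∈ I := fun i => by
      rw [mem_closedBall_zero_iff] at hξ
      simp only [I, Set.mem_ofPred_eq, zero_sub, enorm_neg, Real.enorm_eq_ofReal_abs]
      exact ENNReal.ofReal_le_ofReal ((PiLp.norm_apply_le ξ i).trans hξ)
    simpa [F, hmem, α, Fin.prod_univ_three] using inv_ofReal_xih_le ξ
  calc ∫⁻ ξ in Metric.closedBall (0 : E3) A, (ENNReal.ofReal (xih ξ))⁻¹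
      ≤ ∫⁻ ξ : E3, ∏ i, F i (ξ i) :=
        (setLIntegral_mono' Metric.isClosed_closedBall.measurableSet hpointwise).trans
          (setLIntegral_le_lintegral _ _)
    _ = ∏ i, ∫⁻ s, F i s := by
        rw [← lintegral_fin_nat_prod_eq_prod hF]
        exact (PiLp.volume_preserving_ofLp (Fin 3)).lintegral_comp_emb
          (MeasurableEquiv.toLp 2 (Fin 3 → ℝ)).symm.measurableEmbedding
          fun x : Fin 3 → ℝ => ∏ i, F i (x i)
    _ = ∏ i, ENNReal.ofReal (2 / (1 - α i) * A ^ (1 - α i)) := by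
        refine Finset.prod_congr rfl fun i _ => ?_
        rw [lintegral_indicator hI]
        exact setLIntegral_enorm_sub_le_rpow (hα i) hA 0
    _ = ENNReal.ofReal (32 * A ^ 2) := by
        rw [← ENNReal.ofReal_prod_of_nonneg fun i _ =>
          mul_nonneg (div_nonneg two_pos.le (sub_pos.2 (hα i)).le) (Real.rpow_nonneg hA _)]
        congr 1
        have hsqrt : A ^ (1 / 2 : ℝ) * A ^ (1 / 2 : ℝ) = A := by
          rw [← Real.sqrt_eq_rpow, Real.mul_self_sqrt hA]
        rw [Fin.prod_univ_three, show α 0 = 1 / 2 from rfl, show α 1 = 1 / 2 from rfl,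
          show α 2 = 0 from rfl]
        norm_num
        linear_combination 32 * A * hsqrt

/-- The unit vector along the `i`-th coordinate axis that points in the direction of the sign
`s`. -/
def signedAxis (i : Fin 3) (s : ℤˣ) : E3 := EuclideanSpace.single i ((s : ℤ) : ℝ)

theorem inner_signedAxis (i : Fin 3) (s : ℤˣ) (ξ : E3) :
    inner ℝ (signedAxis i s) ξ = ((s : ℤ) : ℝ) * ξ i := by
  simp [signedAxis, EuclideanSpace.inner_single_left]

theorem norm_signedAxis (i : Fin 3) (s : ℤˣ) : ‖signedAxis i s‖ = 1 := by
  rcases Int.units_eq_one_or s with rfl | rfl <;> simp [signedAxis]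

theorem inner_signedAxis_signedAxis_of_ne {i j : Fin 3} (hij : i ≠ j) (s s' : ℤˣ) :
    inner ℝ (signedAxis i s) (signedAxis j s') = (0 : ℝ) := by
  rw [inner_signedAxis]
  simp [signedAxis, hij]

theorem signedAxis_neg (i : Fin 3) (s : ℤˣ) : signedAxis i (-s) = -signedAxis i s := by
  ext j
  rcases eq_or_ne j i with rfl | hji <;> simp [signedAxis, *]

theorem inner_signedAxis_sq (i : Fin 3) (s : ℤˣ) (ξ : E3) :
    inner ℝ (signedAxis i s) ξ ^ 2 = ξ i ^ 2 := by
  rcases Int.units_eq_one_or s with rfl | rfl <;> simp [inner_signedAxis]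

theorem exists_inner_signedAxis_eq_abs (i : Fin 3) (ξ : E3) :
    ∃ s, inner ℝ (signedAxis i s) ξ = |ξ i| := by
  simp only [inner_signedAxis]
  rcases abs_choice (ξ i) with h | h
  · exact ⟨1, by simp [h]⟩
  · exact ⟨-1, by simp [h]⟩

theorem norm_sub_inner_signedAxis_smul (s : ℤˣ) (ξ : E3) :
    ‖ξ - inner ℝ (signedAxis 2 s) ξ • signedAxis 2 s‖ = xih ξ := by
  rw [xih, ← Real.sqrt_sq (norm_nonneg (_ - _)), norm_sub_inner_smul_sq (norm_signedAxis 2 s),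
    inner_signedAxis_sq, EuclideanSpace.real_norm_sq_eq, Fin.sum_univ_three]
  ring_nf

theorem dispersiveDecay_axialPiece (hγ : 0 < γ) (hσ : σ = 1 ∨ σ = -1) (hr : 0 < r) (hr1 : r ≤ 1)
    (hR : 1 ≤ R) (s : ℤˣ) :
    DispersiveDecay (twoCenterPhase (signedAxis 2 s) γ σ)
      (volume.restrict (axialPiece (signedAxis 2 s) r R))
      (ENNReal.ofReal (15552 / √(2 * γ ^ 5 / (1 + 8 * γ) ^ 5) * (R ^ 3 / √r))) (1 / 2) := by
  set e := signedAxis 2 s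
  have he : ‖e‖ = 1 := norm_signedAxis 2 s
  have hA : ∀ ξ ∈ axialPiece e r R, ‖ξ‖ ≤ 8 * R := fun ξ hξ => by
    linarith [norm_le_of_mem_axialPiece he hr.le hξ, hξ.2.1]
  have hproj : ∀ ξ (t : ℝ), ‖ξ + t • e - inner ℝ e (ξ + t • e) • e‖ = ‖ξ - inner ℝ e ξ • e‖ := by
    intro ξ t
    rw [inner_add_right, real_inner_smul_right, real_inner_self_eq_norm_sq, he]
    congr 1
    module
  refine dispersiveDecay_twoCenterPhase (v := e) (L := R)
    ((isCompact_closedBall 0 (8 * R)).of_isClosed_subset (isClosed_axialPiece e r R)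
      fun ξ hξ => mem_closedBall_zero_iff.2 (hA ξ hξ)) (convex_axialPiece e r R) hA (by positivity)
    (by positivity) hσ (fun _ => norm_nonneg _) hproj
    (fun ξ hξ => smul_add_ne_zero he hγ.le (hr.le.trans hξ.1))
    (fun ξ hξ => le_normHess_sub_of_mem_axialPiece he hγ.le hr hr1 hR hξ)
    (ENNReal.ofReal_ne_zero_iff.2 (by positivity)) ?_
  simp only [e, norm_sub_inner_signedAxis_smul]
  refine (mul_le_mul_right (setLIntegral_inv_xih_le (by positivity)) _).trans_eq ?_
  rw [norm_signedAxis, ← ENNReal.ofReal_mul (by positivity)]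
  have hsqrt : √(2 * γ ^ 5 / (1 + 8 * γ) ^ 5 * r / R ^ 4) =
      √(2 * γ ^ 5 / (1 + 8 * γ) ^ 5) * √r / R ^ 2 := by
    rw [Real.sqrt_div (by positivity), Real.sqrt_mul (by positivity),
      show R ^ 4 = (R ^ 2) ^ 2 by ring, Real.sqrt_sq (by positivity)]
  rw [hsqrt]
  congr 1
  field_simp
  ring

theorem dispersiveDecay_slantedPiece {u e : E3} (he : ‖e‖ = 1) (hu : ‖u‖ = 1)
    (hue : inner ℝ u e = (0 : ℝ)) (hγ : 0 < γ) (hσ : σ = 1 ∨ σ = -1) (hr : 0 < r) (hr1 : r ≤ 1)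
    (hR : 1 ≤ R) :
    DispersiveDecay (twoCenterPhase e γ σ) (volume.restrict (slantedPiece u e r R))
      (ENNReal.ofReal (6000 * volume.real (Metric.ball (0 : E3) 1) /
        √(γ ^ 3 / (1 + 8 * γ) ^ 3) * (R ^ 3 / √r))) (1 / 2) := by
  have hball := measureReal_ball_pos (volume : Measure E3) 0 one_pos
  have hA : ∀ ξ ∈ slantedPiece u e r R, ‖ξ‖ ≤ 8 * R := fun ξ hξ => by
    linarith [norm_le_of_mem_slantedPiece he hu hr.le hξ, hξ.2.2.1]
  have huv : ‖u + e‖ ≤ 2 := (norm_add_le u e).trans (by rw [hu, he]; norm_num)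
  refine dispersiveDecay_twoCenterPhase (v := u + e)
    (c := γ ^ 3 / (1 + 8 * γ) ^ 3 * r / R ^ 2) (L := R) (w := fun _ => 1)
    ((isCompact_closedBall 0 (8 * R)).of_isClosed_subset (isClosed_slantedPiece u e r R)
      fun ξ hξ => mem_closedBall_zero_iff.2 (hA ξ hξ)) (convex_slantedPiece u e r R) hA
    (by positivity) (by positivity) hσ (fun _ => zero_le_one) (fun _ _ => rfl)
    (fun ξ hξ => smul_add_ne_zero he hγ.le (hr.le.trans hξ.1))
    (fun ξ hξ => by
      simpa using le_normHess_sub_of_mem_slantedPiece he hu hue hγ hr hr1 hR hξ)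
    (ENNReal.ofReal_ne_zero_iff.2 (by positivity)) ?_
  have hsqrt : √(γ ^ 3 / (1 + 8 * γ) ^ 3 * r / R ^ 2) =
      √(γ ^ 3 / (1 + 8 * γ) ^ 3) * √r / R := by
    rw [Real.sqrt_div (by positivity), Real.sqrt_mul (by positivity), Real.sqrt_sq (by positivity)]
  have hvolume : volume (Metric.closedBall (0 : E3) (8 * R + R * ‖u + e‖)) ≤
      ENNReal.ofReal ((10 * R) ^ 3 * volume.real (Metric.ball (0 : E3) 1)) := by
    refine (measure_mono (Metric.closedBall_subset_closedBall
      (by nlinarith : 8 * R + R * ‖u + e‖ ≤ 10 * R))).trans_eq ?_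
    rw [Measure.addHaar_closedBall _ _ (by positivity), finrank_euclideanSpace_fin,
      ENNReal.ofReal_mul (by positivity), ofReal_measureReal measure_ball_lt_top.ne]
  simp only [ENNReal.ofReal_one, inv_one, lintegral_const, Measure.restrict_apply_univ, one_mul]
  refine (mul_le_mul_right hvolume _).trans_eq ?_
  rw [← ENNReal.ofReal_mul (by positivity), hsqrt]
  congr 1
  field_simp
  ring

end Covering

section Cover

variable {r R γ σ : ℝ} {ξ : E3}

/-- The ten pieces on which the phase is curved: those around the two vertical half-axes, and
those leaning from a vertical half-axis towards a horizontal one. -/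
def curvedPiece (r R : ℝ) : ℤˣ × Option (Fin 2 × ℤˣ) → Set E3
  | (s, none) => axialPiece (signedAxis 2 s) r R
  | (s, some (i, t)) => slantedPiece (signedAxis i.castSucc t) (signedAxis 2 s) r R

theorem mem_axialPiece_signedAxis {s : ℤˣ} (hs : inner ℝ (signedAxis 2 s) ξ = |ξ 2|)
    (hξ : ‖ξ‖ ≤ 2 * R) (hr : r ≤ |ξ 2|) (h : xih ξ ≤ 3 * |ξ 2|) :
    ξ ∈ axialPiece (signedAxis 2 s) r R := by
  rw [axialPiece, Set.mem_ofPred_eq, norm_sub_inner_signedAxis_smul, hs]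
  exact ⟨hr, (PiLp.norm_apply_le ξ 2).trans hξ, h⟩

theorem mem_slantedPiece_signedAxis {i j : Fin 3} {s t : ℤˣ} (hi : i ≠ 2)
    (hij : ξ 0 ^ 2 + ξ 1 ^ 2 = ξ i ^ 2 + ξ j ^ 2)
    (hs : inner ℝ (signedAxis 2 s) ξ = |ξ 2|) (ht : inner ℝ (signedAxis i t) ξ = |ξ i|)
    (hξ : ‖ξ‖ ≤ 2 * R) (hr : r ≤ |ξ 2|) (h2 : 2 * |ξ 2| ≤ |ξ i|) (hj : |ξ j| ≤ |ξ i|) :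
    ξ ∈ slantedPiece (signedAxis i t) (signedAxis 2 s) r R := by
  set u := signedAxis i t
  set e := signedAxis 2 s
  have horth : inner ℝ e (ξ - inner ℝ u ξ • u) = inner ℝ e ξ := by
    rw [inner_sub_right, real_inner_smul_right, inner_signedAxis_signedAxis_of_ne hi.symm, mul_zero,
      sub_zero]
  have hsq : ‖ξ - inner ℝ u ξ • u - inner ℝ e ξ • e‖ ^ 2 = ξ j ^ 2 := by
    rw [← horth, norm_sub_inner_smul_sq (norm_signedAxis 2 s), horth,
      norm_sub_inner_smul_sq (norm_signedAxis i t), inner_signedAxis_sq, inner_signedAxis_sq,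
      EuclideanSpace.real_norm_sq_eq, Fin.sum_univ_three]
    linarith
  have hnorm : ‖ξ - inner ℝ u ξ • u - inner ℝ e ξ • e‖ = |ξ j| :=
    (abs_norm _).symm.trans ((sq_eq_sq_iff_abs_eq_abs _ _).1 hsq)
  exact ⟨hr.trans_eq hs.symm, by rwa [hs, ht], ht.trans_le ((PiLp.norm_apply_le ξ i).trans hξ),
    hnorm.trans_le (hj.trans_eq ht.symm)⟩

theorem subset_iUnion_curvedPiece (r R : ℝ) :
    {ξ : E3 | ‖ξ‖ ≤ 2 * R ∧ r ≤ |ξ 2|} ⊆ ⋃ k, curvedPiece r R k := by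
  rintro ξ ⟨hξ, hr⟩
  obtain ⟨s, hs⟩ := exists_inner_signedAxis_eq_abs 2 ξ
  rw [Set.mem_iUnion]
  by_cases haxial : xih ξ ≤ 3 * |ξ 2|
  · exact ⟨(s, none), mem_axialPiece_signedAxis hs hξ hr haxial⟩
  have hfar : (3 * |ξ 2|) ^ 2 < ξ 0 ^ 2 + ξ 1 ^ 2 :=
    (Real.lt_sqrt (by positivity)).1 (not_le.1 haxial)
  have hslanted : ∀ i j : Fin 3, ξ 0 ^ 2 + ξ 1 ^ 2 = ξ i ^ 2 + ξ j ^ 2 → |ξ j| ≤ |ξ i| →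
      2 * |ξ 2| ≤ |ξ i| := by
    intro i j hij hj
    refine abs_le_of_sq_le_sq' ?_ (abs_nonneg _) |>.2
    nlinarith [sq_le_sq.2 hj, sq_abs (ξ i), sq_abs (ξ 2)]
  rcases le_total |ξ 0| |ξ 1| with h | h
  · obtain ⟨t, ht⟩ := exists_inner_signedAxis_eq_abs 1 ξ
    have hswap := add_comm (ξ 0 ^ 2) (ξ 1 ^ 2)
    exact ⟨(s, some (1, t)), mem_slantedPiece_signedAxis (by decide) hswap hs ht hξ hr
      (hslanted 1 0 hswap h) h⟩
  · obtain ⟨t, ht⟩ := exists_inner_signedAxis_eq_abs 0 ξ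
    exact ⟨(s, some (0, t)), mem_slantedPiece_signedAxis (by decide) rfl hs ht hξ hr
      (hslanted 0 1 rfl h) h⟩

theorem DispersiveDecay.twoCenterPhase_neg {V : Type*} [NormedAddCommGroup V]
    [InnerProductSpace ℝ V] [MeasurableSpace V] {ν : Measure V} {κ : ℝ≥0∞} {α : ℝ} {e : V}
    (h : DispersiveDecay (twoCenterPhase e γ σ) ν κ α) (hσ : σ = 1 ∨ σ = -1) :
    DispersiveDecay (twoCenterPhase (-e) γ σ) ν κ α := by
  have hne : σ ≠ 0 := by rcases hσ with rfl | rfl <;> norm_num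
  have hnorm : ‖σ‖ₑ = 1 := by rcases hσ with rfl | rfl <;> simp
  have hmul := h.const_mul hne
  simpa only [← _root_.twoCenterPhase_neg hσ, hnorm, ENNReal.one_rpow, mul_one] using hmul

theorem DispersiveDecay.twoCenterPhase_signedAxis {ν : Measure E3} {κ : ℝ≥0∞} {α : ℝ} {s : ℤˣ}
    (h : DispersiveDecay (twoCenterPhase (signedAxis 2 s) γ σ) ν κ α) (hσ : σ = 1 ∨ σ = -1) :
    DispersiveDecay (twoCenterPhase (signedAxis 2 1) γ σ) ν κ α := by
  rcases Int.units_eq_one_or s with rfl | rfl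
  · exact h
  · simpa only [signedAxis_neg, neg_neg] using h.twoCenterPhase_neg hσ

theorem exists_dispersiveDecay_curvedPiece (hγ : 0 < γ) (k : ℤˣ × Option (Fin 2 × ℤˣ)) :
    ∃ K, 0 < K ∧ ∀ σ r R : ℝ, (σ = 1 ∨ σ = -1) → 0 < r → r ≤ 1 → 1 ≤ R →
      DispersiveDecay (twoCenterPhase (signedAxis 2 1) γ σ) (volume.restrict (curvedPiece r R k))
        (ENNReal.ofReal (K * (R ^ 3 / √r))) (1 / 2) := by
  have hball := measureReal_ball_pos (volume : Measure E3) 0 one_pos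
  obtain ⟨s, _ | ⟨i, t⟩⟩ := k
  · exact ⟨_, by positivity, fun σ r R hσ hr hr1 hR =>
      (dispersiveDecay_axialPiece hγ hσ hr hr1 hR s).twoCenterPhase_signedAxis hσ⟩
  · exact ⟨_, by positivity, fun σ r R hσ hr hr1 hR =>
      (dispersiveDecay_slantedPiece (norm_signedAxis 2 s) (norm_signedAxis i.castSucc t)
        (inner_signedAxis_signedAxis_of_ne (Fin.castSucc_lt_last i).ne t s)
        hγ hσ hr hr1 hR).twoCenterPhase_signedAxis hσ⟩

theorem norm_le_of_mem_curvedPiece (hr : 0 ≤ r) {k : ℤˣ × Option (Fin 2 × ℤˣ)}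
    (hξ : ξ ∈ curvedPiece r R k) : ‖ξ‖ ≤ 8 * R := by
  obtain ⟨s, _ | ⟨i, t⟩⟩ := k
  · linarith [norm_le_of_mem_axialPiece (norm_signedAxis 2 s) hr hξ, hξ.2.1]
  · linarith [hξ.2.2.1,
      norm_le_of_mem_slantedPiece (norm_signedAxis 2 s) (norm_signedAxis i.castSucc t) hr hξ]

theorem exists_dispersiveDecay_twoCenterPhase (hγ : 0 < γ) :
    ∃ K, 0 < K ∧ ∀ σ r R : ℝ, (σ = 1 ∨ σ = -1) → 0 < r → r ≤ 1 → 1 ≤ R →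
      ∃ ν : Measure E3, IsFiniteMeasure ν ∧
        volume.restrict {ξ | ‖ξ‖ ≤ 2 * R ∧ r ≤ |ξ 2|} ≤ ν ∧
        DispersiveDecay (twoCenterPhase (signedAxis 2 1) γ σ) ν
          (ENNReal.ofReal (K * (R ^ 3 / √r))) (1 / 2) := by
  choose K hK hdecay using exists_dispersiveDecay_curvedPiece hγ
  refine ⟨∑ k, K k, Finset.sum_pos (fun k _ => hK k) Finset.univ_nonempty,
    fun σ r R hσ hr hr1 hR => ?_⟩
  have hfinite : ∀ k, IsFiniteMeasure (volume.restrict (curvedPiece r R k)) := fun k =>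
    isFiniteMeasure_restrict.2 ((measure_mono fun ξ hξ => mem_closedBall_zero_iff.2
      (norm_le_of_mem_curvedPiece hr.le hξ)).trans_lt measure_closedBall_lt_top).ne
  refine ⟨∑ k, volume.restrict (curvedPiece r R k), inferInstance, ?_, ?_⟩
  · rw [← Measure.sum_fintype]
    exact (Measure.restrict_mono (subset_iUnion_curvedPiece r R) le_rfl).trans
      Measure.restrict_iUnion_le
  · rw [Finset.sum_mul, ENNReal.ofReal_sum_of_nonneg fun k _ => by have := hK k; positivity]
    exact DispersiveDecay.sum (continuous_twoCenterPhase _ _ _) (fun k _ => hfinite k)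
      fun k _ => hdecay k σ r R hσ hr hr1 hR

end Cover

section MixedStrichartz

variable {V : Type*} [NormedAddCommGroup V] [InnerProductSpace ℝ V] [MeasurableSpace V]
  [BorelSpace V] [FiniteDimensional ℝ V] {φ : V → ℝ} {G : V → ℂ}

theorem evolution_eq_fourierInv (φ : V → ℝ) (G : V → ℂ) (τ : ℝ) :
    evolution φ G τ =
      FourierTransformInv.fourierInv fun ξ => cexp (((τ * φ ξ : ℝ) : ℂ) * I) * G ξ := by
  funext x
  rw [Real.fourierInv_eq', evolution]
  congr 1
  funext ξ
  rw [smul_eq_mul, ← mul_assoc, ← Complex.exp_add, planeWave]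
  push_cast
  ring_nf

theorem eLpNorm_evolution_two (hφ : Continuous φ) (hG : Integrable G) (hG2 : MemLp G 2) (τ : ℝ) :
    eLpNorm (evolution φ G τ) 2 volume = eLpNorm G 2 volume := by
  have hnorm : ∀ ξ, ‖cexp (((τ * φ ξ : ℝ) : ℂ) * I) * G ξ‖ = ‖G ξ‖ := fun ξ => by
    rw [norm_mul, Complex.norm_exp_ofReal_mul_I, one_mul]
  have hmeas : AEStronglyMeasurable (fun ξ => cexp (((τ * φ ξ : ℝ) : ℂ) * I) * G ξ) volume :=
    (by fun_prop : Continuous fun ξ => cexp (((τ * φ ξ : ℝ) : ℂ) * I)).aestronglyMeasurable.mul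
      hG.aestronglyMeasurable
  have hcongr := Eventually.of_forall (f := ae (volume : Measure V)) hnorm
  rw [evolution_eq_fourierInv, eLpNorm_fourierInv_eq
    (hG.congr' hmeas (hcongr.mono fun _ => Eq.symm))
    ((memLp_congr_norm hmeas hG2.aestronglyMeasurable hcongr).2 hG2)]
  exact eLpNorm_congr_norm_ae hcongr

theorem eLpNorm_one_le_of_support {S : Set V} (hG : AEStronglyMeasurable G)
    (hGS : ∀ ξ, ξ ∉ S → G ξ = 0) :
    eLpNorm G 1 volume ≤ volume S ^ (1 / 2 : ℝ) * eLpNorm G 2 volume := by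
  rw [← eLpNorm_restrict_eq_of_support_subset (Function.support_subset_iff'.2 hGS), mul_comm]
  refine (eLpNorm_le_eLpNorm_mul_rpow_measure_univ one_le_two hG.restrict).trans ?_
  rw [Measure.restrict_apply_univ, ENNReal.toReal_one, ENNReal.toReal_ofNat,
    show 1 / (1 : ℝ) - 1 / 2 = 1 / 2 by norm_num]
  gcongr
  exact Measure.restrict_le_self

theorem rpow_mul_mul_rpow_mul_mul_rpow {x y z : ℝ≥0∞} {a b c : ℝ} (ha : 0 ≤ a) (hb : 0 ≤ b)
    (hc : 0 ≤ c) (habc : a + b + c = 1) :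
    x ^ a * ((y * x) ^ b * (z * x) ^ c) = y ^ b * z ^ c * x := by
  calc x ^ a * ((y * x) ^ b * (z * x) ^ c) = y ^ b * z ^ c * (x ^ a * x ^ b * x ^ c) := by
        rw [ENNReal.mul_rpow_of_nonneg _ _ hb, ENNReal.mul_rpow_of_nonneg _ _ hc]
        ring
    _ = y ^ b * z ^ c * x := by
        rw [← ENNReal.rpow_add_of_nonneg _ _ ha hb,
          ← ENNReal.rpow_add_of_nonneg _ _ (add_nonneg ha hb) hc, habc, ENNReal.rpow_one]

variable {κ p q : ℝ≥0∞} {α : ℝ} {ν : Measure V} [IsFiniteMeasure ν] {S : Set V}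

theorem DispersiveDecay.eLpNorm_eLpNorm_evolution_le (h : DispersiveDecay φ ν κ α)
    (hφ : Continuous φ) (hα0 : 0 < α) (hα1 : α < 1) (hS : volume.restrict S ≤ ν)
    (hG : Measurable G) (hG2 : MemLp G 2) (hGS : ∀ ξ, ξ ∉ S → G ξ = 0) (hq : 2 ≤ q)
    (hp : p = ⊤ ∨ 2 / α ≤ (1 - 2 / q.toReal) * p.toReal) :
    eLpNorm (fun t => (eLpNorm (evolution φ G t) q volume).toReal) p volume ≤
      (volume S ^ (1 / 2 : ℝ)) ^ (1 - 2 / q.toReal - 2 / α / p.toReal) *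
        ((κ * ENNReal.ofReal (hlsConst α)) ^ (1 / 2 : ℝ)) ^ (2 / α / p.toReal) *
        eLpNorm G 2 volume := by
  have h2α : 0 < 2 / α := by positivity
  have hvolume : volume S ≠ ⊤ := by
    have hle := hS Set.univ
    rw [Measure.restrict_apply_univ] at hle
    exact (hle.trans_lt (measure_lt_top ν _)).ne
  have hbernstein := eLpNorm_one_le_of_support hG.aestronglyMeasurable hGS
  have hM : volume S ^ (1 / 2 : ℝ) * eLpNorm G 2 volume ≠ ⊤ :=
    ENNReal.mul_ne_top (ENNReal.rpow_ne_top_of_nonneg one_half_pos.le hvolume) hG2.2.ne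
  have hGi : Integrable G :=
    memLp_one_iff_integrable.1 ⟨hG.aestronglyMeasurable, hbernstein.trans_lt hM.lt_top⟩
  have hmixed := eLpNorm_eLpNorm_toReal_le (p := p) (ν := volume) (s := .ofReal (2 / α)) hG2.2.ne hM
    (fun t => (eLpNorm_evolution_two hφ hGi hG2 t).le)
    (fun t x => le_iSup (fun x => ‖evolution φ G t x‖ₑ) x)
    (fun t => iSup_le fun x => (enorm_evolution_le t x).trans hbernstein)
    (ENNReal.ofReal_pos.2 h2α).ne' ENNReal.ofReal_ne_top hq
    (by rwa [ENNReal.toReal_ofReal h2α.le])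
  rw [ENNReal.toReal_ofReal h2α.le] at hmixed
  have hb : 0 ≤ 2 / α / p.toReal := by positivity
  have ha := one_sub_two_div_toReal_sub_div_nonneg hq hp
  calc _ ≤ _ := hmixed
    _ ≤ eLpNorm G 2 volume ^ (2 / q.toReal) *
          ((volume S ^ (1 / 2 : ℝ) * eLpNorm G 2 volume) ^
              (1 - 2 / q.toReal - 2 / α / p.toReal) *
            ((κ * ENNReal.ofReal (hlsConst α)) ^ (1 / 2 : ℝ) * eLpNorm G 2 volume) ^
              (2 / α / p.toReal)) := by
        gcongr
        exact h.eLpNorm_iSup_enorm_evolution_le hφ hα0 hα1 hS hG hGi hGS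
    _ = _ := rpow_mul_mul_rpow_mul_mul_rpow (by positivity) ha hb (by ring)

end MixedStrichartz

section Cutoff

variable {ψ : ℝ → ℝ} {r R : ℝ}

theorem Psi_mem_Icc (hψ : IsCutoff ψ) (r R : ℝ) (ξ : E3) : Psi ψ r R ξ ∈ Set.Icc (0 : ℝ) 1 := by
  have hψ' (x : ℝ) : 1 - ψ x ∈ Set.Icc (0 : ℝ) 1 :=
    ⟨sub_nonneg.2 (hψ.2.1 x).2, sub_le_self 1 (hψ.2.1 x).1⟩
  exact unitInterval.mul_mem (hψ.2.1 _) (unitInterval.mul_mem (hψ' _) (hψ' _))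

theorem Psi_eq_zero_of_not_le (hψ : IsCutoff ψ) (hr : 0 < r) (hR : 0 < R) {ξ : E3}
    (hξ : ¬(‖ξ‖ ≤ 2 * R ∧ r ≤ |ξ 2|)) : Psi ψ r R ξ = 0 := by
  rw [Psi]
  rcases not_and_or.1 hξ with h | h
  · rw [hψ.2.2.2 _ ((le_div_iff₀ hR).2 (not_le.1 h).le), zero_mul]
  · rw [hψ.2.2.1 (|ξ 2| / r) ((div_le_one hr).2 (not_le.1 h).le), sub_self, mul_zero, mul_zero]

theorem continuous_Psi (hψ : IsCutoff ψ) (r R : ℝ) : Continuous (Psi ψ r R) := by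
  have := hψ.1.continuous
  unfold Psi xih
  fun_prop

variable {f : E3 → ℂ}

theorem continuous_FT (f : E3 → ℂ) : Continuous (FT f) := by
  by_cases hf : Integrable f
  · exact continuous_fourier_of_integrable hf
  · rw [FT, fourier_eq_zero_of_not_integrable hf]
    exact continuous_zero

theorem eLpNorm_FT_le (hf : MemLp f 2 volume) :
    eLpNorm (FT f) 2 volume ≤ eLpNorm f 2 volume := by
  by_cases hfi : Integrable f
  · exact (eLpNorm_fourier_eq hfi hf).le
  · rw [FT, fourier_eq_zero_of_not_integrable hfi, eLpNorm_zero]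
    exact bot_le

theorem eLpNorm_Psi_mul_FT_le (hψ : IsCutoff ψ) (r R : ℝ) (hf : MemLp f 2 volume) :
    eLpNorm (fun ξ => (Psi ψ r R ξ : ℂ) * FT f ξ) 2 volume ≤ eLpNorm f 2 volume := by
  refine (eLpNorm_mono fun ξ => ?_).trans (eLpNorm_FT_le hf)
  have hPsi := Psi_mem_Icc hψ r R ξ
  rw [norm_mul, Complex.norm_of_nonneg hPsi.1]
  exact mul_le_of_le_one_left (norm_nonneg _) hPsi.2

end Cutoff

theorem lamEV_eq_twoCenterPhase (γ ε1 ε2 : ℝ) (ξ : E3) :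
    lamEV γ ε1 ε2 ξ = ((ε1 * twoCenterPhase (signedAxis 2 1) γ ε2 ξ : ℝ) : ℂ) * I := by
  have haxis : inner ℝ (signedAxis 2 1) ξ = ξ 2 := by simp [inner_signedAxis]
  have hadd := norm_smul_add_sq (norm_signedAxis 2 1) γ ξ
  have hsub := norm_smul_sub_sq (norm_signedAxis 2 1) γ ξ
  rw [haxis] at hadd hsub
  rw [lamEV, twoCenterPhase,
    show 1 + γ ^ 2 * ‖ξ‖ ^ 2 + 2 * γ * ξ 2 = ‖γ • ξ + signedAxis 2 1‖ ^ 2 by rw [hadd]; ring,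
    show 1 + γ ^ 2 * ‖ξ‖ ^ 2 - 2 * γ * ξ 2 = ‖γ • ξ - signedAxis 2 1‖ ^ 2 by rw [hsub]; ring,
    Real.sqrt_sq (norm_nonneg _), Real.sqrt_sq (norm_nonneg _)]
  push_cast
  ring

theorem PsiG_eq_evolution (ψ : ℝ → ℝ) (r R γ ε1 ε2 ε t : ℝ) (f : E3 → ℂ) :
    PsiG ψ r R γ ε1 ε2 ε t f =
      evolution (fun ξ => ε1 / ε * twoCenterPhase (signedAxis 2 1) γ ε2 ξ)
        (fun ξ => (Psi ψ r R ξ : ℂ) * FT f ξ) t := by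
  rw [PsiG, FTinv, evolution_eq_fourierInv]
  congr 1
  funext ξ
  rw [lamEV_eq_twoCenterPhase, mul_comm (Psi ψ r R ξ : ℂ), mul_assoc]
  congr 2
  push_cast
  ring

theorem two_le_and_four_le_of_admissible {p q : ℝ≥0∞}
    (hpq : (p = ⊤ ∧ q = 2) ∨
      (2 < q ∧ ENNReal.ofReal (4 * q.toReal / (q.toReal - 2)) ≤ p ∧ (q = ⊤ → 4 ≤ p))) :
    2 ≤ q ∧ (p = ⊤ ∨ 4 ≤ (1 - 2 / q.toReal) * p.toReal) := by
  rcases hpq with ⟨hp, hq⟩ | ⟨hq, hpq, hp4⟩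
  · exact ⟨hq.ge, .inl hp⟩
  refine ⟨hq.le, or_iff_not_imp_left.2 fun hp => ?_⟩
  rcases eq_or_ne q ⊤ with rfl | hqt
  · simpa using ENNReal.toReal_mono hp (hp4 rfl)
  · have hQ : 2 < q.toReal := by simpa using (ENNReal.toReal_lt_toReal (by norm_num) hqt).2 hq
    have hP := (ENNReal.ofReal_le_iff_le_toReal hp).1 hpq
    rw [div_le_iff₀ (sub_pos.2 hQ)] at hP
    rw [one_sub_div (by positivity), div_mul_eq_mul_div, le_div_iff₀ (by positivity)]
    linarith

theorem volume_norm_le_rpow_half_le {R : ℝ} (hR : 0 ≤ R) :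
    volume {ξ : E3 | ‖ξ‖ ≤ 2 * R} ^ (1 / 2 : ℝ) ≤
      ENNReal.ofReal (√(8 * volume.real (Metric.ball (0 : E3) 1)) * R ^ (3 / 2 : ℝ)) := by
  have hball : {ξ : E3 | ‖ξ‖ ≤ 2 * R} = Metric.closedBall 0 (2 * R) := by
    ext; exact mem_closedBall_zero_iff.symm
  have hR3 : R ^ (3 / 2 : ℝ) = (R ^ 3) ^ (1 / 2 : ℝ) := by
    rw [← Real.rpow_natCast, ← Real.rpow_mul hR]
    norm_num
  rw [hball, Measure.addHaar_closedBall _ _ (by positivity),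
    ← ofReal_measureReal (measure_ball_lt_top (μ := volume) (x := (0 : E3))).ne,
    ← ENNReal.ofReal_mul (by positivity), ENNReal.ofReal_rpow_of_nonneg (by positivity) (by simp),
    Real.sqrt_eq_rpow, hR3, ← Real.mul_rpow (by positivity) (by positivity),
    finrank_euclideanSpace_fin]
  exact (congrArg (fun x => ENNReal.ofReal (x ^ (1 / 2 : ℝ))) (by ring)).le

theorem dispersive_rpow_half_eq {K R r ε : ℝ} (hK : 0 ≤ K) (hR : 0 ≤ R) (hr : 0 < r) (hε : 0 < ε)
    {ε1 : ℝ} (hε1 : ε1 = 1 ∨ ε1 = -1) :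
    (ENNReal.ofReal (K * (R ^ 3 / √r)) * ‖ε1 / ε‖ₑ ^ (-(1 / 2) : ℝ) *
        ENNReal.ofReal (hlsConst (1 / 2))) ^ (1 / 2 : ℝ) =
      ENNReal.ofReal (√(12 * K) * R ^ (3 / 2 : ℝ) * r ^ (-(1 / 4) : ℝ) * ε ^ (1 / 4 : ℝ)) := by
  have hscale : ‖ε1 / ε‖ₑ = ENNReal.ofReal ε⁻¹ := by
    rcases hε1 with rfl | rfl <;>
      simp [enorm_eq_ofReal_abs, abs_div, abs_of_pos hε]
  have hroot {x : ℝ} (hx : 0 ≤ x) (a : ℝ) : x ^ a = (x ^ (2 * a)) ^ (1 / 2 : ℝ) := by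
    rw [← Real.rpow_mul hx]
    ring_nf
  rw [hscale, ENNReal.ofReal_rpow_of_pos (inv_pos.2 hε), ← ENNReal.ofReal_mul (by positivity),
    ← ENNReal.ofReal_mul (by positivity),
    ENNReal.ofReal_rpow_of_nonneg (mul_nonneg (by positivity) (hlsConst_pos (by norm_num)).le)
      (by norm_num),
    hroot hR, hroot hr.le, hroot hε.le, Real.sqrt_eq_rpow (12 * K),
    ← Real.mul_rpow (by positivity) (by positivity),
    ← Real.mul_rpow (by positivity) (by positivity),
    ← Real.mul_rpow (by positivity) (by positivity)]
  congr 2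
  rw [Real.inv_rpow hε.le, ← Real.rpow_neg hε.le, Real.sqrt_eq_rpow, div_eq_mul_inv,
    ← Real.rpow_neg hr.le, ← Real.rpow_natCast]
  norm_num [hlsConst]
  ring

theorem strichartz_scaling {b k R r ε θ P : ℝ} (hb : 0 < b) (hk : 0 < k) (hR : 0 < R) (hr : 0 < r)
    (hε : 0 < ε) :
    (b * R ^ (3 / 2 : ℝ)) ^ (1 - 2 / θ - 4 / P) *
        (k * R ^ (3 / 2 : ℝ) * r ^ (-(1 / 4) : ℝ) * ε ^ (1 / 4 : ℝ)) ^ (4 / P) =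
      b ^ (1 - 2 / θ - 4 / P) * k ^ (4 / P) * R ^ (3 / 2 - 3 / θ) * r ^ (-1 / P) *
        ε ^ (1 / P) := by
  rw [Real.mul_rpow hb.le (by positivity), Real.mul_rpow (by positivity) (by positivity),
    Real.mul_rpow (by positivity) (by positivity), Real.mul_rpow hk.le (by positivity),
    ← Real.rpow_mul hR.le, ← Real.rpow_mul hR.le, ← Real.rpow_mul hr.le, ← Real.rpow_mul hε.le,
    show 3 / 2 - 3 / θ = 3 / 2 * (1 - 2 / θ - 4 / P) + 3 / 2 * (4 / P) by ring, Real.rpow_add hR,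
    show -(1 / 4) * (4 / P) = -1 / P by ring, show 1 / 4 * (4 / P) = 1 / P by ring]
  ring

theorem exists_eLpNorm_eLpNorm_PsiG_le {γ : ℝ} (hγ : 0 < γ) :
    ∃ b k : ℝ, 0 < b ∧ 0 < k ∧ ∀ {p q : ℝ≥0∞}, 2 ≤ q →
      (p = ⊤ ∨ 4 ≤ (1 - 2 / q.toReal) * p.toReal) → ∀ {ψ : ℝ → ℝ}, IsCutoff ψ →
      ∀ {ε1 ε2 : ℝ}, (ε1 = 1 ∨ ε1 = -1) → (ε2 = 1 ∨ ε2 = -1) →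
      ∀ {r R ε : ℝ}, 0 < r → r ≤ 1 → 1 ≤ R → 0 < ε → ∀ {f : E3 → ℂ}, MemLp f 2 volume →
        eLpNorm (fun t => (eLpNorm (PsiG ψ r R γ ε1 ε2 ε t f) q volume).toReal) p volume ≤
          ENNReal.ofReal (b * R ^ (3 / 2 : ℝ)) ^ (1 - 2 / q.toReal - 4 / p.toReal) *
            ENNReal.ofReal (k * R ^ (3 / 2 : ℝ) * r ^ (-(1 / 4) : ℝ) * ε ^ (1 / 4 : ℝ)) ^
              (4 / p.toReal) * eLpNorm f 2 volume := by
  obtain ⟨K, hK, hdecay⟩ := exists_dispersiveDecay_twoCenterPhase hγ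
  refine ⟨√(8 * volume.real (Metric.ball (0 : E3) 1)), √(12 * K),
    Real.sqrt_pos.2 (mul_pos (by norm_num) (measureReal_ball_pos _ _ one_pos)), by positivity, ?_⟩
  intro p q hq hp ψ hψ ε1 ε2 hε1 hε2 r R ε hr hr1 hR hε f hf
  have hR0 : 0 < R := one_pos.trans_le hR
  obtain ⟨ν, hν, hSν, hφ⟩ := hdecay ε2 r R hε2 hr hr1 hR
  have hc : ε1 / ε ≠ 0 := div_ne_zero (by rcases hε1 with rfl | rfl <;> norm_num) hε.ne'
  have hGcont := (Complex.continuous_ofReal.comp (continuous_Psi hψ r R)).mul (continuous_FT f)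
  have hG2 := eLpNorm_Psi_mul_FT_le hψ r R hf
  have h4 : 2 / (1 / 2 : ℝ) = 4 := by norm_num
  have hmixed := (hφ.const_mul hc).eLpNorm_eLpNorm_evolution_le
    ((continuous_twoCenterPhase (signedAxis 2 1) γ ε2).const_mul _) one_half_pos one_half_lt_one
    hSν hGcont.measurable ⟨hGcont.aestronglyMeasurable, hG2.trans_lt hf.2⟩
    (fun ξ hξ => by simp [Psi_eq_zero_of_not_le hψ hr hR0 hξ]) hq (by rwa [h4])
  rw [h4, dispersive_rpow_half_eq hK.le hR0.le hr hε hε1] at hmixed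
  have hvolume : volume {ξ : E3 | ‖ξ‖ ≤ 2 * R ∧ r ≤ |ξ 2|} ^ (1 / 2 : ℝ) ≤
      ENNReal.ofReal (√(8 * volume.real (Metric.ball (0 : E3) 1)) * R ^ (3 / 2 : ℝ)) :=
    (ENNReal.rpow_le_rpow (measure_mono fun ξ hξ => hξ.1) one_half_pos.le).trans
      (volume_norm_le_rpow_half_le hR0.le)
  simp_rw [PsiG_eq_evolution]
  refine hmixed.trans ?_
  gcongr
  · exact one_sub_two_div_toReal_sub_div_nonneg hq hp
  · exact hG2

theorem strichartz_scalar_general (γ : ℝ) (hγ : 0 < γ) (p q : ℝ≥0∞)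
    (hpq : (p = ⊤ ∧ q = 2) ∨
      (2 < q ∧ ENNReal.ofReal (4 * q.toReal / (q.toReal - 2)) ≤ p ∧ (q = ⊤ → 4 ≤ p))) :
    ∃ C : ℝ, 0 < C ∧
      ∀ ψ : ℝ → ℝ, IsCutoff ψ →
      ∀ ε1 ε2 : ℝ, (ε1 = 1 ∨ ε1 = -1) → (ε2 = 1 ∨ ε2 = -1) →
      ∀ r R ε : ℝ, 0 < r → r ≤ 1 → 1 ≤ R → 0 < ε →
      ∀ f : E3 → ℂ, MemLp f 2 volume →
        eLpNorm (fun t => (eLpNorm (PsiG ψ r R γ ε1 ε2 ε t f) q volume).toReal) p volume ≤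
          ENNReal.ofReal (C * R ^ ((3 : ℝ) / 2 - 3 / q.toReal) * r ^ (-(1 : ℝ) / p.toReal) *
              ε ^ (1 / p.toReal)) * eLpNorm f 2 volume := by
  obtain ⟨b, k, hb, hk, hbound⟩ := exists_eLpNorm_eLpNorm_PsiG_le hγ
  obtain ⟨hq, hp⟩ := two_le_and_four_le_of_admissible hpq
  refine ⟨b ^ (1 - 2 / q.toReal - 4 / p.toReal) * k ^ (4 / p.toReal), by positivity, ?_⟩
  intro ψ hψ ε1 ε2 hε1 hε2 r R ε hr hr1 hR hε f hf
  have hR0 : 0 < R := one_pos.trans_le hR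
  rw [← strichartz_scaling hb hk hR0 hr hε, ENNReal.ofReal_mul (by positivity),
    ← ENNReal.ofReal_rpow_of_pos (by positivity), ← ENNReal.ofReal_rpow_of_pos (by positivity)]
  exact hbound hq hp hψ hε1 hε2 hr hr1 hR hε hf

/-- Strichartz estimate for the cut-off scalar propagator: for
`q ∈ (2,∞]` and `p ≥ 4q/(q−2)` (or `(p,q) = (∞,2)`), and every `f ∈ L²(ℝ³)`,
`‖Ψ_{r,R}(D)G_λ(·)f‖_{L^p((0,∞);L^q)} ≤ C R^{3/2−3/q} r^{−4/p} ε^{1/p} ‖f‖_{L²}`,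
with `C` depending only on `γ̄`, `ψ`, `p`, `q`; the endpoint `p = 4q/(q−2)` included. -/
theorem strichartz_scalar (γ : ℝ) (hγ : 0 < γ) (ψ : ℝ → ℝ) (hψ : IsCutoff ψ)
    (p q : ℝ≥0∞)
    (hpq : (p = ⊤ ∧ q = 2) ∨
      (2 < q ∧ ENNReal.ofReal (4 * q.toReal / (q.toReal - 2)) ≤ p ∧ (q = ⊤ → 4 ≤ p))) :
    ∃ C : ℝ, 0 < C ∧
      ∀ ε1 ε2 : ℝ, (ε1 = 1 ∨ ε1 = -1) → (ε2 = 1 ∨ ε2 = -1) →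
      ∀ r R ε : ℝ, 0 < r → r ≤ 1 → 1 ≤ R → 0 < ε →
      ∀ f : E3 → ℂ, MemLp f 2 volume →
        eLpNorm (fun t => (eLpNorm (PsiG ψ r R γ ε1 ε2 ε t f) q volume).toReal) p
            (volume.restrict (Set.Ioi (0:ℝ))) ≤
          ENNReal.ofReal (C * R ^ ((3:ℝ)/2 - 3 / q.toReal) * r ^ (-(4:ℝ) / p.toReal) *
              ε ^ (1 / p.toReal)) * eLpNorm f 2 volume := by
  obtain ⟨C, hC, hbound⟩ := strichartz_scalar_general γ hγ p q hpq
  refine ⟨C, hC, fun ε1 ε2 hε1 hε2 r R ε hr hr1 hR hε f hf => ?_⟩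
  refine ((eLpNorm_mono_measure _ Measure.restrict_le_self).trans
    (hbound ψ hψ ε1 ε2 hε1 hε2 r R ε hr hr1 hR hε f hf)).trans ?_
  gcongr ENNReal.ofReal (_ * ?_ * _) * _
  exact Real.rpow_le_rpow_of_exponent_ge hr hr1 (by gcongr; norm_num)
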